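/- arXiv:2403.16098 — 10 statements merged into one kernel-verified Lean document; each statement's English description precedes it below -/
import Mathlib

section
/- Let n, m ≥ 1 and let q ≥ 0, r ≥ 1 be integers with q + 1 ≤ n and r ≤ m. Then the set B of all squarefree vectors u : Fin n ⊕ Fin m → ℕ with (|u|_x, |u|_y) = (q, r) or (|u|_x, |u|_y) = (q+1, r−1) satisfies the exchange property; equivalently, the mixed product ideal I_q·J_r + I_{q+1}·J_{r−1} of squarefree Veronese ideals is matroidal. -/
/-- A set `B` of exponent vectors (all of the same total degree) satisfies the exchange
property if for all `u, v ∈ B` and every index `i` with `u i > v i` there is an index `j`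
with `u j < v j` such that `u - e_i + e_j ∈ B`. -/
def ExchangeProperty {σ : Type*} [DecidableEq σ] (B : Set (σ → ℕ)) : Prop :=
  ∀ u ∈ B, ∀ v ∈ B, ∀ i : σ, v i < u i →
    ∃ j : σ, u j < v j ∧
      (fun l => u l - (if l = i then 1 else 0) + (if l = j then 1 else 0)) ∈ B

/-!
Two constructions preserve the exchange property: bounding every coordinate, and taking the
preimage under the map that sums coordinates over the blocks of a partition. For the latter, either
a unit can be moved inside its own block, or the sum over that block is larger for `u` than for `v`,
and then an exchange of block sums tells into which block the unit should go. Mixed products arise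
in this way from the two blocks of variables, whose pairs of block sums lie on an antidiagonal
segment.
-/

section ExchangeProperty

variable {σ ι : Type*} [DecidableEq σ] [DecidableEq ι]

lemma exchangeProperty_iff {B : Set (σ → ℕ)} :
    ExchangeProperty B ↔ ∀ u ∈ B, ∀ v ∈ B, ∀ i, v i < u i →
      ∃ j, u j < v j ∧ u - Pi.single i 1 + Pi.single j 1 ∈ B := by
  have unit_exchange (u : σ → ℕ) (i j : σ) :
      (fun l => u l - (if l = i then 1 else 0) + (if l = j then 1 else 0)) =
        u - Pi.single i 1 + Pi.single j 1 := by
    ext l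
    simp only [Pi.add_apply, Pi.sub_apply, Pi.single_apply]
  simp only [ExchangeProperty, unit_exchange]

lemma ExchangeProperty.inter_Iic {B : Set (σ → ℕ)} (hB : ExchangeProperty B) (c : σ → ℕ) :
    ExchangeProperty (B ∩ Set.Iic c) := by
  rw [exchangeProperty_iff] at hB ⊢
  rintro u ⟨huB, huc⟩ v ⟨hvB, hvc⟩ i hi
  obtain ⟨j, hj, hmem⟩ := hB u huB v hvB i hi
  refine ⟨j, hj, hmem, fun l => ?_⟩
  have hul : u l ≤ c l := huc l
  have huj : u j < c j := hj.trans_le (hvc j)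
  simp only [Pi.add_apply, Pi.sub_apply, Pi.single_apply]
  obtain rfl | hlj := eq_or_ne l j
  · rw [if_pos rfl]
    omega
  · rw [if_neg hlj]
    omega

lemma single_one_le_iff {u : σ → ℕ} {i : σ} : Pi.single i 1 ≤ u ↔ 0 < u i :=
  update_le_iff.trans (and_iff_left fun l _ => Nat.zero_le (u l))

lemma linearMap_sub_single_one [Finite σ] [Finite ι] (f : σ → ι) {u : σ → ℕ} {i : σ}
    (hi : 0 < u i) :
    FunOnFinite.linearMap ℕ ℕ f (u - Pi.single i 1) =
      FunOnFinite.linearMap ℕ ℕ f u - Pi.single (f i) 1 := by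
  apply eq_tsub_of_add_eq
  rw [← FunOnFinite.linearMap_piSingle ℕ ℕ f i 1, ← map_add,
    tsub_add_cancel_of_le (single_one_le_iff.mpr hi)]

lemma ExchangeProperty.preimage_linearMap [Finite σ] [Finite ι] {B : Set (ι → ℕ)}
    (hB : ExchangeProperty B) (f : σ → ι) :
    ExchangeProperty (FunOnFinite.linearMap ℕ ℕ f ⁻¹' B) := by
  have := Fintype.ofFinite σ
  rw [exchangeProperty_iff] at hB ⊢
  intro u hu v hv i hi
  have hui : 0 < u i := Nat.zero_lt_of_lt hi
  by_cases same_block : ∃ j, f j = f i ∧ u j < v j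
  · obtain ⟨j, hji, hj⟩ := same_block
    refine ⟨j, hj, ?_⟩
    rwa [Set.mem_preimage, map_add, FunOnFinite.linearMap_piSingle, hji,
      ← FunOnFinite.linearMap_piSingle ℕ ℕ f i 1, ← map_add,
      tsub_add_cancel_of_le (single_one_le_iff.mpr hui)]
  · push Not at same_block
    have hsum : FunOnFinite.linearMap ℕ ℕ f v (f i) < FunOnFinite.linearMap ℕ ℕ f u (f i) := by
      simp only [FunOnFinite.linearMap_apply_apply]
      exact Finset.sum_lt_sum (fun l hl => same_block l (Finset.mem_filter_univ l |>.mp hl))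
        ⟨i, Finset.mem_filter_univ i |>.mpr rfl, hi⟩
    obtain ⟨b, hb, hmem⟩ := hB _ hu _ hv (f i) hsum
    simp only [FunOnFinite.linearMap_apply_apply] at hb
    obtain ⟨j, hjb, hj⟩ := Finset.exists_lt_of_sum_lt hb
    obtain rfl : f j = b := Finset.mem_filter_univ j |>.mp hjb
    refine ⟨j, hj, ?_⟩
    rwa [Set.mem_preimage, map_add, linearMap_sub_single_one f hui,
      FunOnFinite.linearMap_piSingle]

lemma exchangeProperty_antidiagonal_segment (d : ℕ) {A : Set ℕ} (hA : A.OrdConnected) :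
    ExchangeProperty {w : Bool → ℕ | w true + w false = d ∧ w true ∈ A} := by
  rw [exchangeProperty_iff]
  rintro w ⟨hwd, hwA⟩ w' ⟨hwd', hwA'⟩ (_ | _) hi
  · have hsum : w true + 1 + (w false - 1) = d := by omega
    have hmem : w true + 1 ∈ A := hA.out hwA hwA' ⟨by omega, by omega⟩
    exact ⟨true, by omega, by simpa using ⟨hsum, hmem⟩⟩
  · have hsum : w true - 1 + (w false + 1) = d := by omega
    have hmem : w true - 1 ∈ A := hA.out hwA' hwA ⟨by omega, by omega⟩
    exact ⟨false, by omega, by simpa using ⟨hsum, hmem⟩⟩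

end ExchangeProperty

theorem mixed_product_two_step_matroidal_general {α β : Type*} [Fintype α] [Fintype β]
    [DecidableEq α] [DecidableEq β] (c : α ⊕ β → ℕ) (d : ℕ) {A : Set ℕ} (hA : A.OrdConnected) :
    ExchangeProperty {u : α ⊕ β → ℕ |
      (∀ l, u l ≤ c l) ∧ (∑ i, u (.inl i)) + (∑ j, u (.inr j)) = d ∧ (∑ i, u (.inl i)) ∈ A} := by
  convert ((exchangeProperty_antidiagonal_segment d hA).preimage_linearMap
    (Sum.isLeft : α ⊕ β → Bool)).inter_Iic c using 1
  ext u
  simp [FunOnFinite.linearMap_apply_apply, Finset.sum_filter, Pi.le_def, and_comm]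

/-- The mixed product ideal `I_q J_r + I_{q+1} J_{r-1}` of squarefree Veronese ideals is
matroidal: its set of exponent vectors satisfies the exchange property. -/
theorem mixed_product_two_step_matroidal (n m : ℕ) (hn : 1 ≤ n) (hm : 1 ≤ m)
    (q r : ℕ) (hr : 1 ≤ r) (hq : q + 1 ≤ n) (hrm : r ≤ m) :
    ExchangeProperty {u : Fin n ⊕ Fin m → ℕ |
      (∀ l, u l ≤ 1) ∧
      (((∑ i : Fin n, u (Sum.inl i)) = q ∧ (∑ j : Fin m, u (Sum.inr j)) = r) ∨
       ((∑ i : Fin n, u (Sum.inl i)) = q + 1 ∧ (∑ j : Fin m, u (Sum.inr j)) = r - 1))} := by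
  convert mixed_product_two_step_matroidal_general (fun _ : Fin n ⊕ Fin m => 1) (q + r)
    (Set.ordConnected_Icc (a := q) (b := q + 1)) using 4
  rw [Set.mem_Icc]
  omega
end

section
/- Let n, m ≥ 1 and let r > 1 be an integer with r ≤ n and r ≤ m. Then the set B of all squarefree vectors u : Fin n ⊕ Fin m → ℕ with (|u|_x, |u|_y) = (r, 0) or (|u|_x, |u|_y) = (0, r) does NOT satisfy the exchange property; equivalently, the mixed product ideal I_r + J_r is not matroidal (not polymatroidal). -/
/-! If `v ≤ u` on a block `s` of variables and `v` has smaller degree on `s` than `u`, then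
exchanging a variable of `s` out of `u` must bring in a variable outside `s`, so the degree on `s`
drops by exactly one. On the exponent vectors of `I_a J_b + I_c J_d` the `x`-degree takes only the
values `a` and `c`, which leaves no room for `a - 1` when `c + 1 < a`. -/

open Finset

theorem ExchangeProperty.exists_sum_add_one_eq {σ : Type*} [DecidableEq σ] {B : Set (σ → ℕ)}
    (hB : ExchangeProperty B) {u v : σ → ℕ} (hu : u ∈ B) (hv : v ∈ B) {s : Finset σ}
    (hle : ∀ k ∈ s, v k ≤ u k) (hlt : ∑ k ∈ s, v k < ∑ k ∈ s, u k) :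
    ∃ w ∈ B, ∑ k ∈ s, w k + 1 = ∑ k ∈ s, u k := by
  obtain ⟨i, his, hi⟩ := exists_lt_of_sum_lt hlt
  obtain ⟨j, hj, hw⟩ := hB u hu v hv i hi
  have hjs : j ∉ s := fun hjs => (hle j hjs).not_gt hj
  refine ⟨_, hw, ?_⟩
  calc ∑ k ∈ s, (u k - (if k = i then 1 else 0) + if k = j then 1 else 0) + 1
      = ∑ k ∈ s, (u k - (if k = i then 1 else 0)) + ∑ k ∈ s, if k = i then 1 else 0 := by
        simp [sum_add_distrib, his, hjs]
    _ = ∑ k ∈ s, u k := by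
        rw [← sum_add_distrib]
        refine sum_congr rfl fun k _ => Nat.sub_add_cancel ?_
        split_ifs with hk
        · exact hk ▸ Nat.one_le_of_lt hi
        · exact Nat.zero_le _

section MixedProduct

variable {ι κ : Type*} [Fintype ι] [Fintype κ]

variable (ι κ) in
/-- The exponent vectors of the monomial generators of the mixed product ideal `I_a J_b`, where
`I_a` and `J_b` are generated by the squarefree monomials of degree `a` in the variables indexed
by `ι` and of degree `b` in those indexed by `κ`. -/
def mixedProductExponents (a b : ℕ) : Set (ι ⊕ κ → ℕ) :=
  {u | (∀ l, u l ≤ 1) ∧ ∑ i, u (Sum.inl i) = a ∧ ∑ j, u (Sum.inr j) = b}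

variable [DecidableEq ι] [DecidableEq κ]

theorem indicator_disjSum_mem_mixedProductExponents (s : Finset ι) (t : Finset κ) :
    (fun l => if l ∈ s.disjSum t then 1 else 0) ∈ mixedProductExponents ι κ #s #t :=
  ⟨fun _ => ite_le_one le_rfl zero_le_one, by simp, by simp⟩

theorem Ir_plus_Jr_not_matroidal_general {a b c d : ℕ} (hca : c + 1 < a)
    (ha : a ≤ Fintype.card ι) (hb : b ≤ Fintype.card κ) (hd : d ≤ Fintype.card κ) :
    ¬ ExchangeProperty (mixedProductExponents ι κ a b ∪ mixedProductExponents ι κ c d) := by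
  intro hB
  obtain ⟨s, -, rfl⟩ := exists_subset_card_eq (s := (univ : Finset ι)) ha
  obtain ⟨s', hs', rfl⟩ := exists_subset_card_eq (s := s) (n := c) (by lia)
  obtain ⟨t, -, rfl⟩ := exists_subset_card_eq (s := (univ : Finset κ)) hb
  obtain ⟨t', -, rfl⟩ := exists_subset_card_eq (s := (univ : Finset κ)) hd
  have hu := indicator_disjSum_mem_mixedProductExponents s t
  have hv := indicator_disjSum_mem_mixedProductExponents s' t'
  have hle : ∀ k ∈ univ.map Function.Embedding.inl,
      (if k ∈ s'.disjSum t' then 1 else 0) ≤ if k ∈ s.disjSum t then 1 else 0 := by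
    grind [Function.Embedding.inl_apply, inl_mem_disjSum]
  obtain ⟨w, hw, hdeg⟩ := hB.exists_sum_add_one_eq (.inl hu) (.inr hv) hle (by
    simp only [sum_map, Function.Embedding.inl_apply, hu.2.1, hv.2.1]; lia)
  simp only [sum_map, Function.Embedding.inl_apply, hu.2.1] at hdeg
  rcases hw with ⟨-, hx, -⟩ | ⟨-, hx, -⟩ <;> lia

end MixedProduct

/-- For `r > 1` the mixed product ideal `I_r + J_r` is not matroidal: its set of
exponent vectors does not satisfy the exchange property. -/
theorem Ir_plus_Jr_not_matroidal (n m : ℕ) (hn : 1 ≤ n) (hm : 1 ≤ m)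
    (r : ℕ) (hr : 1 < r) (hrn : r ≤ n) (hrm : r ≤ m) :
    ¬ ExchangeProperty {u : Fin n ⊕ Fin m → ℕ |
      (∀ l, u l ≤ 1) ∧
      (((∑ i : Fin n, u (Sum.inl i)) = r ∧ (∑ j : Fin m, u (Sum.inr j)) = 0) ∨
       ((∑ i : Fin n, u (Sum.inl i)) = 0 ∧ (∑ j : Fin m, u (Sum.inr j)) = r))} := by
  simpa only [mixedProductExponents, ← Set.ofPred_or, ← and_or_left] using
    Ir_plus_Jr_not_matroidal_general (ι := Fin n) (κ := Fin m) (a := r) (b := 0) (c := 0) (d := r)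
      (by lia) (by simpa) (by simp) (by simpa)
end

section
/- Let n, m ≥ 1 and let s, t, r be integers with 2 ≤ s < n, t ≥ 1 and r = s + t ≤ m. Then the set B of all squarefree vectors u : Fin n ⊕ Fin m → ℕ with (|u|_x, |u|_y) = (0, r) or (|u|_x, |u|_y) = (s, t) does NOT satisfy the exchange property; equivalently, the mixed product ideal J_r + I_s·J_t is not polymatroidal. -/
/-!
The exchange property forces intermediate block degrees. Suppose `u, v ∈ B` satisfy `v ≤ u` on a
block of variables, with strict inequality somewhere. Exchanging there lowers `u` by one inside the
block, and the index that is raised satisfies `u j < v j`, so it lies outside. Hence `B` contains a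
vector whose degree in the block is one less than that of `u`. Starting from block degrees `s ≥ 2`
and `0`, this gives `s - 1`, which is neither `0` nor `s`.
-/

lemma exists_le_one_sum_eq {α : Type*} [Fintype α] {k : ℕ} (hk : k ≤ Fintype.card α) :
    ∃ u : α → ℕ, (∀ a, u a ≤ 1) ∧ ∑ a, u a = k := by
  classical
  obtain ⟨S, -, hS⟩ := Finset.exists_subset_card_eq hk
  exact ⟨fun a => if a ∈ S then 1 else 0, fun a => ite_le_one le_rfl zero_le_one,
    by simpa using hS⟩

lemma exists_le_one_sum_inl_eq_sum_inr_eq {α β : Type*} [Fintype α] [Fintype β] {k l : ℕ}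
    (hk : k ≤ Fintype.card α) (hl : l ≤ Fintype.card β) :
    ∃ u : α ⊕ β → ℕ, (∀ c, u c ≤ 1) ∧ ∑ a, u (Sum.inl a) = k ∧ ∑ b, u (Sum.inr b) = l := by
  obtain ⟨x, hx_le, hx_sum⟩ := exists_le_one_sum_eq hk
  obtain ⟨y, hy_le, hy_sum⟩ := exists_le_one_sum_eq hl
  exact ⟨Sum.elim x y, Sum.forall.mpr ⟨hx_le, hy_le⟩, hx_sum, hy_sum⟩

lemma sum_exchange_add_one {σ : Type*} [DecidableEq σ] {X : Finset σ} {u : σ → ℕ} {i j : σ}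
    (hi : i ∈ X) (hj : j ∉ X) (hui : 0 < u i) :
    ∑ l ∈ X, (u l - (if l = i then 1 else 0) + (if l = j then 1 else 0)) + 1 = ∑ l ∈ X, u l := by
  have exchanged_add : ∀ l ∈ X,
      u l - (if l = i then 1 else 0) + (if l = j then 1 else 0) + (if l = i then 1 else 0) =
        u l := by
    intro l hl
    have hlj : l ≠ j := ne_of_mem_of_not_mem hl hj
    grind
  calc
    _ = ∑ l ∈ X, (u l - (if l = i then 1 else 0) + (if l = j then 1 else 0)) +
          ∑ l ∈ X, (if l = i then 1 else 0) := by
      rw [Finset.sum_ite_eq' X i, if_pos hi]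
    _ = ∑ l ∈ X, u l := by
      rw [← Finset.sum_add_distrib, Finset.sum_congr rfl exchanged_add]

lemma ExchangeProperty.exists_mem_sum_add_one_eq {σ : Type*} [DecidableEq σ]
    {B : Set (σ → ℕ)} (hB : ExchangeProperty B) {X : Finset σ} {u v : σ → ℕ}
    (hu : u ∈ B) (hv : v ∈ B) (hle : ∀ l ∈ X, v l ≤ u l)
    (hlt : ∑ l ∈ X, v l < ∑ l ∈ X, u l) :
    ∃ w ∈ B, ∑ l ∈ X, w l + 1 = ∑ l ∈ X, u l := by
  obtain ⟨i, hi, hvu⟩ := Finset.exists_lt_of_sum_lt hlt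
  obtain ⟨j, huv, hw⟩ := hB u hu v hv i hvu
  have hj : j ∉ X := fun hjX => (hle j hjX).not_gt huv
  exact ⟨_, hw, sum_exchange_add_one hi hj (Nat.zero_lt_of_lt hvu)⟩

theorem Jr_plus_IsJt_not_polymatroidal_general {α β : Type*} [Fintype α] [Fintype β]
    [DecidableEq α] [DecidableEq β] {s t : ℕ} (hs : 2 ≤ s) (hsα : s ≤ Fintype.card α)
    (hstβ : s + t ≤ Fintype.card β) :
    ¬ ExchangeProperty {u : α ⊕ β → ℕ |
      (∀ l, u l ≤ 1) ∧
      (((∑ a, u (Sum.inl a)) = 0 ∧ (∑ b, u (Sum.inr b)) = s + t) ∨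
       ((∑ a, u (Sum.inl a)) = s ∧ (∑ b, u (Sum.inr b)) = t))} := by
  intro hB
  obtain ⟨u, hu_le, hu_inl, hu_inr⟩ :=
    exists_le_one_sum_inl_eq_sum_inr_eq hsα (le_of_add_le_right hstβ)
  obtain ⟨v, hv_le, hv_inl, hv_inr⟩ :=
    exists_le_one_sum_inl_eq_sum_inr_eq (Nat.zero_le (Fintype.card α)) hstβ
  have hv_zero : ∀ a, v (Sum.inl a) = 0 := by simpa using hv_inl
  obtain ⟨w, ⟨-, hw⟩, hw_sum⟩ := hB.exists_mem_sum_add_one_eq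
    (X := Finset.univ.map Function.Embedding.inl)
    ⟨hu_le, .inr ⟨hu_inl, hu_inr⟩⟩ ⟨hv_le, .inl ⟨hv_inl, hv_inr⟩⟩
    (by simp [hv_zero]) (by simpa [hv_zero, hu_inl] using Nat.zero_lt_of_lt hs)
  simp only [Finset.sum_map, Function.Embedding.inl_apply, hu_inl] at hw_sum
  omega

/-- For `2 ≤ s < n`, `t ≥ 1` and `r = s + t ≤ m`, the mixed product ideal
`J_r + I_s J_t` is not polymatroidal: its set of exponent vectors does not satisfy
the exchange property. -/
theorem Jr_plus_IsJt_not_polymatroidal (n m : ℕ) (hn : 1 ≤ n) (hm : 1 ≤ m)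
    (s t r : ℕ) (hs : 2 ≤ s) (hsn : s < n) (ht : 1 ≤ t) (hr : r = s + t) (hrm : r ≤ m) :
    ¬ ExchangeProperty {u : Fin n ⊕ Fin m → ℕ |
      (∀ l, u l ≤ 1) ∧
      (((∑ i : Fin n, u (Sum.inl i)) = 0 ∧ (∑ j : Fin m, u (Sum.inr j)) = r) ∨
       ((∑ i : Fin n, u (Sum.inl i)) = s ∧ (∑ j : Fin m, u (Sum.inr j)) = t))} := by
  subst hr
  exact Jr_plus_IsJt_not_polymatroidal_general hs (by simpa using hsn.le) (by simpa using hrm)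
end

section
/- Let n, m ≥ 1 and let q, r, s, t be integers with q ≥ 1, t ≥ 1, s > q + 1, q + r = s + t, s ≤ n and r ≤ m. Then the set B of all squarefree vectors u : Fin n ⊕ Fin m → ℕ with (|u|_x, |u|_y) = (q, r) or (|u|_x, |u|_y) = (s, t) does NOT satisfy the exchange property; equivalently, the mixed product ideal I_q·J_r + I_s·J_t is not polymatroidal. -/
/-!
Choose `u` of block degree `(q, r)` and `v` of block degree `(s, t)` with `v ≤ u` on the second
block. As `t < r`, the vector `u` exceeds `v` at some index there, and exchanging `u` at that
index can only raise a coordinate of the first block. The result has first block degree `q + 1`,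
which lies strictly between `q` and `s`.
-/

theorem exists_le_sum_eq {ι : Type*} [Fintype ι] (a : ι → ℕ) {k : ℕ} (hk : k ≤ ∑ i, a i) :
    ∃ b ≤ a, ∑ i, b i = k := by
  obtain ⟨b, hba, hb⟩ := Finsupp.exists_le_degree_eq (Finsupp.equivFunOnFinite.symm a) k
    (by simpa [Finsupp.degree_eq_sum] using hk)
  exact ⟨b, hba, by rw [← hb, Finsupp.degree_eq_sum]⟩

section SumBlocks

variable {σ τ : Type*} [Fintype σ] [DecidableEq σ] [DecidableEq τ]

theorem ExchangeProperty.exists_sum_inl_eq_add_one {B : Set (σ ⊕ τ → ℕ)}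
    (hB : ExchangeProperty B) {u v : σ ⊕ τ → ℕ} (hu : u ∈ B) (hv : v ∈ B)
    (hvu : v ∘ Sum.inr < u ∘ Sum.inr) :
    ∃ w ∈ B, ∑ i, w (Sum.inl i) = ∑ i, u (Sum.inl i) + 1 := by
  obtain ⟨hle, i, hi⟩ := Pi.lt_def.mp hvu
  obtain ⟨j | j, hj, hw⟩ := hB u hu v hv (Sum.inr i) hi
  · exact ⟨_, hw, by simp [Finset.sum_add_distrib]⟩
  · exact absurd hj (hle j).not_gt

theorem IqJr_plus_IsJt_not_polymatroidal_general [Fintype τ] (a : σ ⊕ τ → ℕ) {q r s t : ℕ}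
    (hs : q + 1 < s) (hqr : q + r = s + t)
    (hsa : s ≤ ∑ i, a (Sum.inl i)) (hra : r ≤ ∑ j, a (Sum.inr j)) :
    ¬ ExchangeProperty {u : σ ⊕ τ → ℕ |
      (∀ l, u l ≤ a l) ∧
      ((∑ i, u (Sum.inl i) = q ∧ ∑ j, u (Sum.inr j) = r) ∨
       (∑ i, u (Sum.inl i) = s ∧ ∑ j, u (Sum.inr j) = t))} := by
  intro hB
  obtain ⟨x, hxa, hx⟩ := exists_le_sum_eq (k := q) (a ∘ Sum.inl) (by lia)
  obtain ⟨x', hxa', hx'⟩ := exists_le_sum_eq (a ∘ Sum.inl) hsa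
  obtain ⟨y, hya, hy⟩ := exists_le_sum_eq (a ∘ Sum.inr) hra
  obtain ⟨y', hyy', hy'⟩ := exists_le_sum_eq (k := t) y (by lia)
  have hlt : y' < y := lt_of_le_of_ne hyy' (by rintro rfl; lia)
  obtain ⟨w, ⟨-, hw⟩, hwx⟩ := hB.exists_sum_inl_eq_add_one
    (u := Sum.elim x y) (v := Sum.elim x' y')
    ⟨Sum.forall.mpr ⟨hxa, hya⟩, Or.inl ⟨hx, hy⟩⟩
    ⟨Sum.forall.mpr ⟨hxa', hyy'.trans hya⟩, Or.inr ⟨hx', hy'⟩⟩ hlt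
  simp only [Sum.elim_inl, hx] at hwx
  lia

end SumBlocks

/-- For `q ≥ 1`, `t ≥ 1`, `s > q + 1` and `q + r = s + t` the mixed product ideal
`I_q J_r + I_s J_t` is not polymatroidal: its set of exponent vectors does not satisfy
the exchange property. -/
theorem IqJr_plus_IsJt_not_polymatroidal (n m : ℕ) (hn : 1 ≤ n) (hm : 1 ≤ m)
    (q r s t : ℕ) (hq : 1 ≤ q) (ht : 1 ≤ t) (hs : q + 1 < s) (hqr : q + r = s + t)
    (hsn : s ≤ n) (hrm : r ≤ m) :
    ¬ ExchangeProperty {u : Fin n ⊕ Fin m → ℕ |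
      (∀ l, u l ≤ 1) ∧
      (((∑ i : Fin n, u (Sum.inl i)) = q ∧ (∑ j : Fin m, u (Sum.inr j)) = r) ∨
       ((∑ i : Fin n, u (Sum.inl i)) = s ∧ (∑ j : Fin m, u (Sum.inr j)) = t))} := by
  exact IqJr_plus_IsJt_not_polymatroidal_general (fun _ ↦ 1) hs hqr (by simpa) (by simpa)
end

section
/- Let n, m ≥ 1 and let q ≥ 0 and r ≥ 1 be integers. Then the set B of ALL vectors u : Fin n ⊕ Fin m → ℕ (not necessarily squarefree) with (|u|_x, |u|_y) = (q, r) or (|u|_x, |u|_y) = (q+1, r−1) satisfies the exchange property; equivalently, the sum of products of Veronese ideals (x_1,…,x_n)^q·(y_1,…,y_m)^r + (x_1,…,x_n)^{q+1}·(y_1,…,y_m)^{r−1} is polymatroidal. -/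
/-!
For a partition `π : σ → τ` of the variables into blocks, `FunOnFinite.linearMap ℕ ℕ π` sends an
exponent vector to the vector of its block degrees. The exchange property pulls back along this
map: if `v` has at least the degree of `u` in the block of `i`, then `v` exceeds `u` at some index
of that same block, and exchanging within a block keeps the block degrees; otherwise exchange the
block degrees, which names a block, hence an index, where `v` exceeds `u`. The two-step sum is the
pullback of `{(q, r), (q + 1, r - 1)}`, that is of the vectors `d + e_a` with `d = (q, r - 1)`.
-/

open FunOnFinite (linearMap)

theorem exists_lt_of_linearMap_lt {σ τ : Type*} [Finite σ] [Finite τ] {π : σ → τ} {u v : σ → ℕ}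
    {c : τ} (h : linearMap ℕ ℕ π u c < linearMap ℕ ℕ π v c) : ∃ j, π j = c ∧ u j < v j := by
  classical
  have := Fintype.ofFinite σ
  rw [FunOnFinite.linearMap_apply_apply, FunOnFinite.linearMap_apply_apply] at h
  simpa using Finset.exists_lt_of_sum_lt h

theorem linearMap_sumElim_const {α β : Type*} [Fintype α] [Fintype β] (u : α ⊕ β → ℕ) :
    linearMap ℕ ℕ (Sum.elim (fun _ => (0 : Fin 2)) fun _ => 1) u =
      ![∑ i, u (.inl i), ∑ j, u (.inr j)] := by
  ext c
  fin_cases c <;> simp [FunOnFinite.linearMap_apply_apply, Finset.sum_filter]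

section Exchange

variable {σ τ : Type*} [DecidableEq σ] [DecidableEq τ]

-- Writing `u = w + e_i` removes the truncated subtraction from the definition.
theorem exchangeProperty_iff_add_single {B : Set (σ → ℕ)} :
    ExchangeProperty B ↔ ∀ w v : σ → ℕ, ∀ i, w + Pi.single i 1 ∈ B → v ∈ B → v i ≤ w i →
      ∃ j, (w + Pi.single i 1 : σ → ℕ) j < v j ∧ w + Pi.single j 1 ∈ B := by
  have exchange_eq (w : σ → ℕ) (i j : σ) :
      (fun l => (w + Pi.single i 1 : σ → ℕ) l - (if l = i then 1 else 0) +
        (if l = j then 1 else 0)) = w + Pi.single j 1 := by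
    ext l
    simp [Pi.single_apply]
  constructor
  · intro hB w v i hw hv hi
    simpa only [exchange_eq] using hB _ hw v hv i (by simpa [Nat.lt_succ_iff] using hi)
  · intro hB u hu v hv i hi
    have single_le : Pi.single i 1 ≤ u :=
      update_le_iff.2 ⟨Nat.one_le_of_lt hi, fun _ _ => Nat.zero_le _⟩
    obtain ⟨w, rfl⟩ : ∃ w : σ → ℕ, u = w + Pi.single i 1 :=
      ⟨_, (tsub_add_cancel_of_le single_le).symm⟩
    simp only [exchange_eq]
    exact hB w v i hu hv (by simpa [Nat.lt_succ_iff] using hi)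

theorem exchangeProperty_setOf_eq_add_single (d : τ → ℕ) (S : Set τ) :
    ExchangeProperty {c | ∃ a ∈ S, c = d + Pi.single a 1} := by
  rw [exchangeProperty_iff_add_single]
  rintro w _ i ⟨a, -, hw⟩ ⟨b, hb, rfl⟩ hi
  have hwi : w i + 1 = d i + (Pi.single a 1 : τ → ℕ) i := by simpa using congrFun hw i
  rw [Pi.add_apply] at hi
  obtain rfl : i = a := by
    by_contra hia
    rw [Pi.single_eq_of_ne hia] at hwi
    lia
  obtain rfl : w = d := add_right_cancel hw
  have hbi : b ≠ i := by
    rintro rfl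
    simp at hi
  exact ⟨b, by simp [hbi], b, hb, rfl⟩

theorem ExchangeProperty.preimage_linearMap_s6 [Finite σ] [Finite τ] {D : Set (τ → ℕ)}
    (hD : ExchangeProperty D) (π : σ → τ) : ExchangeProperty (linearMap ℕ ℕ π ⁻¹' D) := by
  rw [exchangeProperty_iff_add_single] at hD ⊢
  simp only [Set.mem_preimage, map_add, FunOnFinite.linearMap_piSingle]
  intro w v i hw hv hi
  rcases lt_or_ge (linearMap ℕ ℕ π w (π i)) (linearMap ℕ ℕ π v (π i)) with hlt | hge
  · obtain ⟨j, hj, hwv⟩ := exists_lt_of_linearMap_lt hlt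
    have hji : j ≠ i := by
      rintro rfl
      exact hi.not_gt hwv
    exact ⟨j, by simpa [hji] using hwv, hj ▸ hw⟩
  · obtain ⟨c, hc, hmem⟩ := hD _ _ (π i) hw hv hge
    have hdeg : linearMap ℕ ℕ π (w + Pi.single i 1) c < linearMap ℕ ℕ π v c := by
      simpa only [map_add, FunOnFinite.linearMap_piSingle] using hc
    obtain ⟨j, rfl, hj⟩ := exists_lt_of_linearMap_lt hdeg
    exact ⟨j, hj, hmem⟩

-- With `V_c` the ideal generated by the variables of block `c`, these are the exponents of the
-- generators of `(∏ c, V_c ^ d c) * ∑ a ∈ S, V_a`.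
theorem veronese_two_step_polymatroidal_general [Finite σ] [Finite τ] (π : σ → τ) (d : τ → ℕ)
    (S : Set τ) :
    ExchangeProperty {u : σ → ℕ | ∃ a ∈ S, linearMap ℕ ℕ π u = d + Pi.single a 1} :=
  (exchangeProperty_setOf_eq_add_single d S).preimage_linearMap_s6 π

end Exchange

/-- The sum of products of Veronese ideals
`(x_1,…,x_n)^q (y_1,…,y_m)^r + (x_1,…,x_n)^{q+1} (y_1,…,y_m)^{r-1}` is polymatroidal:
the set of all (not necessarily squarefree) exponent vectors of the prescribed bidegrees
satisfies the exchange property. -/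
theorem veronese_two_step_polymatroidal (n m : ℕ) (hn : 1 ≤ n) (hm : 1 ≤ m)
    (q r : ℕ) (hr : 1 ≤ r) :
    ExchangeProperty {u : Fin n ⊕ Fin m → ℕ |
      (((∑ i : Fin n, u (Sum.inl i)) = q ∧ (∑ j : Fin m, u (Sum.inr j)) = r) ∨
       ((∑ i : Fin n, u (Sum.inl i)) = q + 1 ∧ (∑ j : Fin m, u (Sum.inr j)) = r - 1))} := by
  simpa [linearMap_sumElim_const, funext_iff, Fin.forall_fin_two, Nat.sub_add_cancel hr,
    -Matrix.cons_add] using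
    veronese_two_step_polymatroidal_general
      (Sum.elim (fun _ : Fin n => (0 : Fin 2)) fun _ : Fin m => 1) ![q, r - 1] {1, 0}
end

section
/- Let n, m ≥ 1 and let s, t, r be integers with s ≥ 2, t ≥ 1 and r = s + t. Then the set B of all vectors u : Fin n ⊕ Fin m → ℕ with (|u|_x, |u|_y) = (0, r) or (|u|_x, |u|_y) = (s, t) does NOT satisfy the exchange property; equivalently, the ideal (y_1,…,y_m)^r + (x_1,…,x_n)^s·(y_1,…,y_m)^t of sums of products of Veronese ideals is not polymatroidal. -/
/-!
Exchange a coordinate of `u` inside a block of variables in which `u` has larger degree than `v`.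
Either the exchange leaves the block, and the degree in the block drops by exactly one, or that
degree stays the same and the excess of `u` over `v` inside the block shrinks, which cannot go on
forever. Hence the degrees in a block attained by a set with the exchange property have no gaps,
whereas the `x`-degrees `0` and `s ≥ 2` leave out `1`.
-/

namespace ExchangeProperty

variable {σ : Type*} [DecidableEq σ] {B : Set (σ → ℕ)} {S : Finset σ} {u v : σ → ℕ} {i j : σ}

theorem sum_exchange_add_one (hi : i ∈ S) (hui : 0 < u i) :
    ∑ l ∈ S, (u l - (if l = i then 1 else 0) + (if l = j then 1 else 0)) + 1 =
      ∑ l ∈ S, u l + if j ∈ S then 1 else 0 := by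
  have hpointwise (l : σ) :
      u l - (if l = i then 1 else 0) + (if l = j then 1 else 0) + (if l = i then 1 else 0) =
        u l + if l = j then 1 else 0 := by
    grind
  simpa [Finset.sum_add_distrib, hi] using Finset.sum_congr (rfl : S = S) fun l _ => hpointwise l

theorem sum_exchange_tsub_lt (hi : i ∈ S) (hvu : v i < u i) (huv : u j < v j) :
    ∑ l ∈ S, (u l - (if l = i then 1 else 0) + (if l = j then 1 else 0) - v l) <
      ∑ l ∈ S, (u l - v l) := by
  refine Finset.sum_lt_sum (fun l _ => ?_) ⟨i, hi, ?_⟩ <;> grind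

theorem exists_sum_add_one_eq_s9 (hB : ExchangeProperty B) (hu : u ∈ B) (hv : v ∈ B)
    (hlt : ∑ l ∈ S, v l < ∑ l ∈ S, u l) : ∃ w ∈ B, ∑ l ∈ S, w l + 1 = ∑ l ∈ S, u l := by
  induction hexcess : ∑ l ∈ S, (u l - v l) using Nat.strong_induction_on generalizing u with
  | _ k ih =>
    subst hexcess
    obtain ⟨i, hi, hvu⟩ := Finset.exists_lt_of_sum_lt hlt
    obtain ⟨j, huv, hmem⟩ := hB u hu v hv i hvu
    have hdeg := sum_exchange_add_one (j := j) hi (Nat.zero_lt_of_lt hvu)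
    by_cases hj : j ∈ S
    · rw [if_pos hj, Nat.add_right_cancel_iff] at hdeg
      have hcloser := sum_exchange_tsub_lt hi hvu huv
      obtain ⟨w, hw, hwdeg⟩ := ih _ hcloser hmem (hlt.trans_eq hdeg.symm) rfl
      exact ⟨w, hw, hwdeg.trans hdeg⟩
    · rw [if_neg hj, add_zero] at hdeg
      exact ⟨_, hmem, hdeg⟩

theorem ordConnected_image_sum (hB : ExchangeProperty B) (S : Finset σ) :
    ((fun u => ∑ l ∈ S, u l) '' B).OrdConnected := by
  refine ⟨?_⟩
  rintro _ ⟨v, hv, rfl⟩ _ hu k ⟨hvk, hku⟩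
  refine Nat.decreasingInduction' (fun c _ hkc hc => ?_) hku hu
  obtain ⟨w, hw, hwdeg : ∑ l ∈ S, w l = c + 1⟩ := hc
  obtain ⟨w', hw', hwdeg'⟩ := hB.exists_sum_add_one_eq_s9 hw hv (S := S) (by grind)
  exact ⟨w', hw', by grind⟩

end ExchangeProperty

theorem exists_sum_inl_eq_and_sum_inr_eq {ι κ : Type*} [Fintype ι] [Fintype κ] [Nonempty ι]
    [Nonempty κ] (a c : ℕ) :
    ∃ u : ι ⊕ κ → ℕ, ∑ i, u (Sum.inl i) = a ∧ ∑ j, u (Sum.inr j) = c := by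
  classical
  obtain ⟨i⟩ := ‹Nonempty ι›
  obtain ⟨j⟩ := ‹Nonempty κ›
  exact ⟨Sum.elim (Pi.single i a) (Pi.single j c), by simp⟩

theorem veronese_mixed_sum_not_polymatroidal_general {ι κ : Type*} [Fintype ι] [Fintype κ]
    [DecidableEq ι] [DecidableEq κ] [Nonempty ι] [Nonempty κ] {a b : ℕ} (hab : a + 1 < b)
    (c d : ℕ) :
    ¬ ExchangeProperty {u : ι ⊕ κ → ℕ |
      (∑ i, u (Sum.inl i) = a ∧ ∑ j, u (Sum.inr j) = c) ∨
        (∑ i, u (Sum.inl i) = b ∧ ∑ j, u (Sum.inr j) = d)} := by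
  intro hB
  obtain ⟨u, hu⟩ := exists_sum_inl_eq_and_sum_inr_eq (ι := ι) (κ := κ) a c
  obtain ⟨v, hv⟩ := exists_sum_inl_eq_and_sum_inr_eq (ι := ι) (κ := κ) b d
  have hdegrees := hB.ordConnected_image_sum (Finset.univ.map Function.Embedding.inl)
  simp only [Finset.sum_map, Function.Embedding.inl_apply] at hdegrees
  obtain ⟨w, hw, hwdeg : ∑ i, w (Sum.inl i) = a + 1⟩ :=
    hdegrees.out ⟨u, Or.inl hu, hu.1⟩ ⟨v, Or.inr hv, hv.1⟩ ⟨a.le_succ, hab.le⟩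
  rcases hw with ⟨hwa, -⟩ | ⟨hwb, -⟩ <;> omega

/-- For `s ≥ 2`, `t ≥ 1` and `r = s + t`, the ideal
`(y_1,…,y_m)^r + (x_1,…,x_n)^s (y_1,…,y_m)^t` is not polymatroidal: its set of exponent
vectors does not satisfy the exchange property. -/
theorem veronese_mixed_sum_not_polymatroidal (n m : ℕ) (hn : 1 ≤ n) (hm : 1 ≤ m)
    (s t r : ℕ) (hs : 2 ≤ s) (ht : 1 ≤ t) (hr : r = s + t) :
    ¬ ExchangeProperty {u : Fin n ⊕ Fin m → ℕ |
      (((∑ i : Fin n, u (Sum.inl i)) = 0 ∧ (∑ j : Fin m, u (Sum.inr j)) = r) ∨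
       ((∑ i : Fin n, u (Sum.inl i)) = s ∧ (∑ j : Fin m, u (Sum.inr j)) = t))} := by
  have := Fin.pos_iff_nonempty.mp hn
  have := Fin.pos_iff_nonempty.mp hm
  exact veronese_mixed_sum_not_polymatroidal_general hs r t
end

section
/- Let n, m ≥ 1, let h ≥ 1, and let a ≤ A be integers with 0 ≤ a, A ≤ n, h − A ≥ 0 and h − a ≤ m. Then the set B of all squarefree vectors u : Fin n ⊕ Fin m → ℕ with total coordinate sum h and a ≤ |u|_x ≤ A satisfies the exchange property. (This is the generator set of the ideal L = ∑_{r} I_{a_r} J_{b_r} with consecutive degrees a_{r+1} = a_r + 1, b_{r−1} = b_r + 1 and constant sum a_r + b_r = h; hence L is polymatroidal.) -/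
/-!
Exchange `i` for some `j` with `u j < v j`, where the two blocks are a set of variables and its
complement. If the sum of `u` over the block of `i` is at most that of `v`, such a `j` exists inside
this block, and both block sums are unchanged. Otherwise any such `j` will do (one exists because the
total sums agree): the sum over the block of `i` drops by at most one and so stays at least that of
`v`. In both cases the new vector and its block sums lie between those of `u` and `v`, so every
interval constraint on the coordinates or on the block sums is preserved.
-/

section Exchange

variable {σ : Type*}

theorem exists_lt_of_sum_le_of_lt {M : Type*} [AddCommMonoid M] [LinearOrder M]
    [IsOrderedCancelAddMonoid M] {s : Finset σ} {u v : σ → M} {i : σ}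
    (hsum : ∑ l ∈ s, u l ≤ ∑ l ∈ s, v l) (his : i ∈ s) (hi : v i < u i) :
    ∃ j ∈ s, u j < v j := by
  by_contra! hvu
  exact (Finset.sum_lt_sum hvu ⟨i, his, hi⟩).not_ge hsum

theorem exists_lt_and_mem_or_sum_lt [Fintype σ] {M : Type*} [AddCommMonoid M] [LinearOrder M]
    [IsOrderedCancelAddMonoid M] {s : Finset σ} {u v : σ → M} {i : σ}
    (hsum : ∑ l, u l = ∑ l, v l) (his : i ∈ s) (hi : v i < u i) :
    ∃ j, u j < v j ∧ (j ∈ s ∨ ∑ l ∈ s, v l < ∑ l ∈ s, u l) := by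
  rcases le_or_gt (∑ l ∈ s, u l) (∑ l ∈ s, v l) with hle | hlt
  · obtain ⟨j, hjs, hj⟩ := exists_lt_of_sum_le_of_lt hle his hi
    exact ⟨j, hj, Or.inl hjs⟩
  · obtain ⟨j, -, hj⟩ := exists_lt_of_sum_le_of_lt hsum.le (Finset.mem_univ i) hi
    exact ⟨j, hj, Or.inr hlt⟩

variable [DecidableEq σ]

/-- The vector `u - e_i + e_j`, with the truncated subtraction of `ℕ`: it is the intended exchange
only when `0 < u i`. -/
def exchange (u : σ → ℕ) (i j : σ) : σ → ℕ := u - Pi.single i 1 + Pi.single j 1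

theorem exchange_apply (u : σ → ℕ) (i j l : σ) :
    exchange u i j l = u l - (if l = i then 1 else 0) + (if l = j then 1 else 0) := by
  simp only [exchange, Pi.add_apply, Pi.sub_apply, Pi.single_apply]

theorem exchangeProperty_iff_exchange_mem {B : Set (σ → ℕ)} :
    ExchangeProperty B ↔ ∀ u ∈ B, ∀ v ∈ B, ∀ i, v i < u i →
      ∃ j, u j < v j ∧ exchange u i j ∈ B := by
  simp only [ExchangeProperty, ← exchange_apply]

theorem exchange_mem_uIcc {u v : σ → ℕ} {i j : σ} (hi : v i < u i) (hj : u j < v j) :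
    exchange u i j ∈ Set.uIcc u v := by
  refine ⟨fun l => ?_, fun l => ?_⟩ <;>
    simp only [Pi.inf_apply, Pi.sup_apply, exchange_apply] <;> grind

theorem exchange_add_single {u : σ → ℕ} {i : σ} (hi : 0 < u i) (j : σ) :
    exchange u i j + Pi.single i 1 = u + Pi.single j 1 := by
  ext l
  simp only [Pi.add_apply, Pi.single_apply, exchange_apply]
  grind

theorem sum_exchange_add_ite (s : Finset σ) {u : σ → ℕ} {i : σ} (hi : 0 < u i) (j : σ) :
    ∑ l ∈ s, exchange u i j l + (if i ∈ s then 1 else 0) =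
      ∑ l ∈ s, u l + (if j ∈ s then 1 else 0) := by
  simpa only [Pi.add_apply, Finset.sum_add_distrib, Finset.sum_pi_single'] using
    congrArg (fun w => ∑ l ∈ s, w l) (exchange_add_single hi j)

variable [Fintype σ]

theorem sum_univ_exchange {u : σ → ℕ} {i : σ} (hi : 0 < u i) (j : σ) :
    ∑ l, exchange u i j l = ∑ l, u l := by
  simpa only [Finset.mem_univ, if_true, Nat.add_right_cancel_iff] using
    sum_exchange_add_ite Finset.univ hi j

theorem exists_sum_exchange_mem_uIcc (s : Finset σ) {u v : σ → ℕ} {i : σ}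
    (hsum : ∑ l, u l = ∑ l, v l) (hi : v i < u i) :
    ∃ j, u j < v j ∧ ∑ l ∈ s, exchange u i j l ∈
      Set.uIcc (∑ l ∈ s, u l) (∑ l ∈ s, v l) := by
  have hexch := sum_exchange_add_ite s (Nat.zero_lt_of_lt hi)
  simp only [Set.mem_uIcc]
  by_cases his : i ∈ s
  · obtain ⟨j, hj, hjs⟩ := exists_lt_and_mem_or_sum_lt hsum his hi
    exact ⟨j, hj, by grind⟩
  · obtain ⟨j, hj, hjs⟩ := exists_lt_and_mem_or_sum_lt hsum (Finset.mem_compl.2 his) hi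
    have hblock : j ∉ s ∨ ∑ l ∈ s, u l < ∑ l ∈ s, v l := by
      have hu := Finset.sum_add_sum_compl s u
      have hv := Finset.sum_add_sum_compl s v
      exact hjs.imp Finset.mem_compl.1 fun hlt => by omega
    exact ⟨j, hj, by grind⟩

theorem generalized_mixed_product_polymatroidal_general (s : Finset σ) (b c : σ → ℕ)
    (h a A : ℕ) :
    ExchangeProperty {u : σ → ℕ |
      u ∈ Set.Icc b c ∧ ∑ l, u l = h ∧ ∑ l ∈ s, u l ∈ Set.Icc a A} := by
  rw [exchangeProperty_iff_exchange_mem]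
  rintro u ⟨hubox, husum, hublock⟩ v ⟨hvbox, hvsum, hvblock⟩ i hi
  obtain ⟨j, hj, hjblock⟩ :=
    exists_sum_exchange_mem_uIcc s (husum.trans hvsum.symm) hi
  exact ⟨j, hj, Set.uIcc_subset_Icc hubox hvbox (exchange_mem_uIcc hi hj),
    (sum_univ_exchange (Nat.zero_lt_of_lt hi) j).trans husum,
    Set.uIcc_subset_Icc hublock hvblock hjblock⟩

end Exchange

/-- The generator set of the generalized mixed product ideal `L = ∑_r I_{a_r} J_{b_r}`
with consecutive degrees and constant total degree `h`, i.e. the set of all squarefree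
exponent vectors of total degree `h` whose `x`-degree lies between `a` and `A`,
satisfies the exchange property; hence `L` is polymatroidal. -/
theorem generalized_mixed_product_polymatroidal (n m : ℕ) (hn : 1 ≤ n) (hm : 1 ≤ m)
    (h a A : ℕ) (hh : 1 ≤ h) (haA : a ≤ A) (hAn : A ≤ n) (hAh : A ≤ h) (ham : h ≤ a + m) :
    ExchangeProperty {u : Fin n ⊕ Fin m → ℕ |
      (∀ l, u l ≤ 1) ∧
      (∑ l : Fin n ⊕ Fin m, u l) = h ∧
      a ≤ (∑ i : Fin n, u (Sum.inl i)) ∧ (∑ i : Fin n, u (Sum.inl i)) ≤ A} := by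
  simpa [Pi.le_def] using generalized_mixed_product_polymatroidal_general
    (Finset.univ.map Function.Embedding.inl) (0 : Fin n ⊕ Fin m → ℕ) 1 h a A
end

section
/- Let K be a field, n, m ≥ 1, let h ≥ 1 and let a ≤ A be integers with 0 ≤ a, A ≤ n, h − A ≥ 0 and h − a ≤ m. Let L be the ideal of S = K[x_1,…,x_n,y_1,…,y_m] generated by all squarefree monomials of total degree h whose degree in the x-variables lies between a and A (equivalently, L = ∑_r I_{a_r} J_{b_r} where a_r runs over the consecutive integers from a to A and b_r = h − a_r, with I_c the squarefree Veronese ideal of degree c in the x-variables and J_d that of degree d in the y-variables). Then L is normal, i.e., L^k is integrally closed for every k ≥ 1. -/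
open MvPolynomial

/-- `f` is integral over the ideal `I`: there is an equation
`f^N + c_1 f^{N-1} + ⋯ + c_N = 0` with `c_i ∈ I^i`. -/
def IsIntegralOverIdeal {R : Type*} [CommRing R] (I : Ideal R) (f : R) : Prop :=
  ∃ N : ℕ, 0 < N ∧ ∃ c : ℕ → R,
    (∀ i ∈ Finset.Icc 1 N, c i ∈ I ^ i) ∧
    f ^ N + ∑ i ∈ Finset.Icc 1 N, c i * f ^ (N - i) = 0

/-- An ideal is integrally closed if it contains every element integral over it. -/
def IsIntegrallyClosedIdeal {R : Type*} [CommRing R] (I : Ideal R) : Prop :=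
  ∀ f, IsIntegralOverIdeal I f → f ∈ I

/-!
Giving the variables in a set `T` weight `1` and all others weight `0`, an equation of integral
dependence over `L ^ k` shows that every monomial of an integral `f` has degree at least `k * c`
in `T` whenever every generator of `L` has degree at least `c` in `T`. Applied to all `T` at once,
these bounds survive cutting all exponents of the monomial down to `k`. The cut-down monomial is
then divisible by one of degree `k * h` whose degree `P` in the `x`-variables lies between `k * a`
and `k * A`. Writing `P` as a sum of `k` numbers `c` between `a` and `A` that differ by at most
one, and dealing out the variables of highest exponent first, exhibits this divisor as an element
of `∏ I_c J_{h-c}`, hence of `L ^ k`.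
-/

section IntegralClosure

variable {R S : Type*} [CommRing R] [CommRing S]

theorem IsIntegralOverIdeal.mono {I J : Ideal R} (hIJ : I ≤ J) {f : R}
    (hf : IsIntegralOverIdeal I f) : IsIntegralOverIdeal J f := by
  obtain ⟨N, hN, c, hc, heq⟩ := hf
  exact ⟨N, hN, c, fun i hi => Ideal.pow_right_mono hIJ i (hc i hi), heq⟩

theorem IsIntegralOverIdeal.map {I : Ideal R} {f : R} (hf : IsIntegralOverIdeal I f)
    (φ : R →+* S) : IsIntegralOverIdeal (I.map φ) (φ f) := by
  obtain ⟨N, hN, c, hc, heq⟩ := hf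
  refine ⟨N, hN, fun i => φ (c i), fun i hi => ?_, ?_⟩
  · rw [← Ideal.map_pow]
    exact Ideal.mem_map_of_mem φ (hc i hi)
  · simpa only [map_add, map_sum, map_mul, map_pow, map_zero] using congrArg φ heq

theorem IsIntegralOverIdeal.of_span_singleton_mul {I : Ideal R} {p g : R} (hp : IsRegular p)
    (h : IsIntegralOverIdeal (Ideal.span {p} * I) (p * g)) : IsIntegralOverIdeal I g := by
  obtain ⟨N, hN, c, hc, heq⟩ := h
  have hd : ∀ i ∈ Finset.Icc 1 N, ∃ d ∈ I ^ i, p ^ i * d = c i := fun i hi => by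
    simpa only [mul_pow, Ideal.span_singleton_pow, Ideal.mem_span_singleton_mul] using hc i hi
  choose! d hdI hdc using hd
  refine ⟨N, hN, d, hdI, (hp.pow N).left.mul_left_eq_zero_iff.1 ?_⟩
  rw [← heq, mul_add, Finset.mul_sum, mul_pow]
  refine congrArg _ (Finset.sum_congr rfl fun i hi => ?_)
  rw [← hdc i hi, mul_pow, ← pow_mul_pow_sub p (Finset.mem_Icc.1 hi).2]
  ring

theorem isIntegrallyClosedIdeal_of_isRadical {I : Ideal R} (hI : I.IsRadical) :
    IsIntegrallyClosedIdeal I := by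
  rintro f ⟨N, -, c, hc, heq⟩
  refine hI ⟨N, ?_⟩
  rw [eq_neg_of_add_eq_zero_left heq]
  refine I.neg_mem (Ideal.sum_mem _ fun i hi => Ideal.mul_mem_right _ _ ?_)
  exact Ideal.pow_le_self (Nat.one_le_iff_ne_zero.1 (Finset.mem_Icc.1 hi).1) (hc i hi)

theorem IsIntegrallyClosedIdeal.comap {J : Ideal S} (hJ : IsIntegrallyClosedIdeal J)
    (φ : R →+* S) : IsIntegrallyClosedIdeal (J.comap φ) :=
  fun _ hf => hJ _ ((hf.map φ).mono Ideal.map_comap_le)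

theorem isIntegrallyClosedIdeal_span_singleton_pow {p : R} (hp : IsRegular p)
    (hrad : (Ideal.span {p}).IsRadical) (c : ℕ) :
    IsIntegrallyClosedIdeal (Ideal.span {p ^ c}) := by
  induction c with
  | zero => simp [IsIntegrallyClosedIdeal]
  | succ c ih =>
    intro f hf
    rw [pow_succ, ← Ideal.span_singleton_mul_span_singleton] at hf ⊢
    obtain ⟨g, rfl⟩ := Ideal.mem_span_singleton.1 (ih f (hf.mono Ideal.mul_le_left))
    exact Ideal.mul_mem_mul (Ideal.mem_span_singleton_self _)
      (isIntegrallyClosedIdeal_of_isRadical hrad g (hf.of_span_singleton_mul (hp.pow c)))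

end IntegralClosure

section Weight

variable {σ R : Type*}

/-- The homomorphism `X i ↦ X i * t ^ w i` into the polynomials in one more variable `t`; it
separates the weighted homogeneous components of a polynomial by their powers of `t`. -/
noncomputable def weightHom [CommSemiring R] (w : σ → ℕ) :
    MvPolynomial σ R →ₐ[R] Polynomial (MvPolynomial σ R) :=
  aeval fun i => Polynomial.C (X i) * Polynomial.X ^ w i

theorem weightHom_monomial [CommSemiring R] (w : σ → ℕ) (u : σ →₀ ℕ) (r : R) :
    weightHom w (monomial u r) =
      Polynomial.C (monomial u r) * Polynomial.X ^ Finsupp.weight w u := by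
  rw [weightHom, aeval_monomial, monomial_eq, Finsupp.weight_apply]
  simp only [Finsupp.prod, Finsupp.sum, mul_pow, Finset.prod_mul_distrib, ← pow_mul,
    Finset.prod_pow_eq_pow_sum, smul_eq_mul, map_mul, map_prod, map_pow, mul_assoc,
    mul_comm (w _)]
  rfl

theorem coeff_weightHom [CommSemiring R] (w : σ → ℕ) (f : MvPolynomial σ R) (n : ℕ) :
    (weightHom w f).coeff n = weightedHomogeneousComponent w n f := by
  classical
  induction f using MvPolynomial.induction_on' with
  | monomial u r =>
    ext v
    rw [weightHom_monomial, Polynomial.coeff_C_mul, Polynomial.coeff_X_pow,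
      coeff_weightedHomogeneousComponent, mul_ite, mul_one, mul_zero, apply_ite (coeff v),
      coeff_zero, coeff_monomial]
    grind
  | add p q hp hq => rw [map_add, Polynomial.coeff_add, hp, hq, map_add]

/-- The ideal of polynomials all of whose monomials have `w`-weight at least `c`, encoded as a
preimage under `weightHom`. -/
noncomputable def weightIdeal (R : Type*) [CommSemiring R] (w : σ → ℕ) (c : ℕ) :
    Ideal (MvPolynomial σ R) :=
  (Ideal.span {Polynomial.X ^ c}).comap (weightHom w).toRingHom

theorem mem_weightIdeal_iff [CommSemiring R] {w : σ → ℕ} {c : ℕ} {f : MvPolynomial σ R} :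
    f ∈ weightIdeal R w c ↔ ∀ u ∈ f.support, c ≤ Finsupp.weight w u := by
  classical
  simp only [weightIdeal, Ideal.mem_comap, Ideal.mem_span_singleton, Polynomial.X_pow_dvd_iff,
    AlgHom.toRingHom_eq_coe, RingHom.coe_coe, coeff_weightHom]
  refine ⟨fun h u hu => ?_, fun h n hn => ?_⟩
  · by_contra! hlt
    apply mem_support_iff.1 hu
    simpa [coeff_weightedHomogeneousComponent] using congrArg (coeff u) (h _ hlt)
  · exact weightedHomogeneousComponent_eq_zero' n f fun u hu => (hn.trans_le (h u hu)).ne'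

theorem prod_X_mem_weightIdeal [CommSemiring R] {w : σ → ℕ} {c : ℕ} {s : Finset σ}
    (hs : c ≤ ∑ i ∈ s, w i) : ∏ i ∈ s, X i ∈ weightIdeal R w c := by
  simp only [weightIdeal, Ideal.mem_comap, Ideal.mem_span_singleton, AlgHom.toRingHom_eq_coe,
    RingHom.coe_coe, map_prod, weightHom, aeval_X, Finset.prod_mul_distrib,
    Finset.prod_pow_eq_pow_sum]
  exact (pow_dvd_pow _ hs).mul_left _

theorem weightIdeal_pow_le [CommSemiring R] (w : σ → ℕ) (c k : ℕ) :
    weightIdeal R w c ^ k ≤ weightIdeal R w (k * c) := by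
  refine (Ideal.le_comap_pow _ k).trans (Ideal.comap_mono ?_)
  rw [Ideal.span_singleton_pow, ← pow_mul, mul_comm]

theorem isIntegrallyClosedIdeal_weightIdeal [CommRing R] [IsReduced R] (w : σ → ℕ) (c : ℕ) :
    IsIntegrallyClosedIdeal (weightIdeal R w c) := by
  refine (isIntegrallyClosedIdeal_span_singleton_pow Polynomial.isRegular_X ?_ c).comap _
  rintro f ⟨n, hn⟩
  rw [Ideal.mem_span_singleton, Polynomial.X_dvd_iff] at hn ⊢
  rw [Polynomial.coeff_zero_eq_eval_zero, Polynomial.eval_pow] at hn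
  rw [Polynomial.coeff_zero_eq_eval_zero]
  exact eq_zero_of_pow_eq_zero hn

theorem weight_indicator_eq_countP (T : σ → Prop) [DecidablePred T] (u : σ →₀ ℕ) :
    Finsupp.weight (fun i => if T i then 1 else 0) u = (Finsupp.toMultiset u).countP T := by
  induction u using Finsupp.induction_linear with
  | zero => simp
  | add u v hu hv => rw [map_add, hu, hv, map_add, Multiset.countP_add]
  | single i n =>
    rw [Finsupp.weight_single, Finsupp.toMultiset_single, Multiset.countP_nsmul,
      ← Multiset.cons_zero, Multiset.countP_cons, Multiset.countP_zero, zero_add, smul_eq_mul]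

end Weight

section Multiset

variable {σ : Type*}

theorem exists_multiset_le_card_eq {z : Multiset σ} {n : ℕ} (hn : n ≤ z.card) :
    ∃ y ≤ z, y.card = n := by
  obtain ⟨y, hy⟩ := Multiset.card_pos_iff_exists_mem.1
    ((Multiset.card_powersetCard n z).symm ▸ Nat.choose_pos hn)
  exact ⟨y, Multiset.mem_powersetCard.1 hy⟩

theorem count_finset_val [DecidableEq σ] (s : Finset σ) (i : σ) :
    s.val.count i = if i ∈ s then 1 else 0 :=
  Multiset.count_eq_of_nodup s.nodup

/-- The multiset `u` with all multiplicities cut down to at most `k`. -/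
def capMultiplicity [DecidableEq σ] (k : ℕ) (u : Multiset σ) : Multiset σ :=
  u ∩ k • u.dedup

theorem count_capMultiplicity [DecidableEq σ] (k : ℕ) (u : Multiset σ) (i : σ) :
    (capMultiplicity k u).count i = min (u.count i) k := by
  rw [capMultiplicity, Multiset.count_inter, Multiset.count_nsmul, Multiset.count_dedup]
  by_cases hi : i ∈ u <;> simp [hi]

theorem capMultiplicity_le [DecidableEq σ] (k : ℕ) (u : Multiset σ) : capMultiplicity k u ≤ u :=
  Multiset.inter_le_left

theorem le_card_filter_capMultiplicity [DecidableEq σ] {S : Set (Finset σ)} {k : ℕ}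
    {u : Multiset σ}
    (hu : ∀ (T : σ → Prop) [DecidablePred T] (c : ℕ),
      (∀ s ∈ S, c ≤ (s.filter T).card) → k * c ≤ u.countP T)
    (W : σ → Prop) [DecidablePred W] {e : ℕ} (he : ∀ s ∈ S, e ≤ (s.filter W).card) :
    k * e ≤ ((capMultiplicity k u).filter W).card := by
  -- The elements of `F` already contribute `k` each after capping, and on `W` without `F` the cap
  -- changes nothing; so it suffices to test `hu` on the latter set.
  set F : Finset σ := u.toFinset.filter fun i => W i ∧ k ≤ u.count i
  have hT : k * (e - F.card) ≤ u.countP fun i => W i ∧ i ∉ F := hu _ _ fun s hs => by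
    have hcover : s.filter W ⊆ s.filter (fun i => W i ∧ i ∉ F) ∪ F := fun i hi => by
      simp only [Finset.mem_union, Finset.mem_filter] at hi ⊢
      tauto
    have hcard := (he s hs).trans ((Finset.card_le_card hcover).trans (Finset.card_union_le _ _))
    omega
  have hle : (u.filter fun i => W i ∧ i ∉ F) + k • F.val ≤ (capMultiplicity k u).filter W := by
    rw [Multiset.le_iff_count]
    intro i
    rw [Multiset.count_add, Multiset.count_nsmul, Multiset.count_filter, Multiset.count_filter,
      count_capMultiplicity]
    grind [count_finset_val, Multiset.count_eq_zero]
  calc k * e ≤ k * (e - F.card) + k * F.card := by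
        rw [← mul_add]
        exact Nat.mul_le_mul_left k le_tsub_add
    _ ≤ ((u.filter fun i => W i ∧ i ∉ F) + k • F.val).card := by
        rw [Multiset.card_add, Multiset.card_nsmul, ← Multiset.countP_eq_card_filter]
        exact Nat.add_le_add_right hT _
    _ ≤ _ := Multiset.card_le_card hle

theorem exists_finset_le_count_sub_le [DecidableEq σ] {z : Multiset σ} {k c : ℕ}
    (hz : ∀ i, z.count i ≤ k + 1) (hlow : (k + 1) * c ≤ z.card + k)
    (hupp : z.card ≤ (k + 1) * c + k) :
    ∃ B : Finset σ, B.card = c ∧ B.val ≤ z ∧ ∀ i, (z - B.val).count i ≤ k := by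
  -- `B` has to contain every element of the maximal multiplicity `k + 1`.
  set F : Finset σ := z.toFinset.filter fun i => z.count i = k + 1
  have hFc : F.card ≤ c := by
    have hle : (k + 1) • F.val ≤ z := Multiset.le_iff_count.2 fun i => by
      grind [Multiset.count_nsmul, count_finset_val]
    have hcard := Multiset.card_le_card hle
    rw [Multiset.card_nsmul, Finset.card_val] at hcard
    by_contra! hlt
    nlinarith
  have hcz : c ≤ z.toFinset.card := by
    have hle : z ≤ (k + 1) • z.toFinset.val := Multiset.le_iff_count.2 fun i => by
      grind [Multiset.count_nsmul, count_finset_val, Multiset.count_eq_zero]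
    have hcard := Multiset.card_le_card hle
    rw [Multiset.card_nsmul, Finset.card_val] at hcard
    by_contra! hlt
    nlinarith
  obtain ⟨B, hFB, hBz, hBc⟩ :=
    Finset.exists_subsuperset_card_eq (Finset.filter_subset _ _) hFc hcz
  refine ⟨B, hBc, ?_, fun i => ?_⟩
  · exact (Multiset.le_iff_subset B.nodup).2 fun i hi => Multiset.mem_toFinset.1 (hBz hi)
  · have hiF := @hFB i
    have hi := hz i
    rw [Multiset.count_sub, count_finset_val]
    grind [Multiset.count_eq_zero]

theorem exists_balanced_multiset {k a A P : ℕ} (hlow : k * a ≤ P) (hupp : P ≤ k * A) :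
    ∃ C : Multiset ℕ, C.card = k ∧ C.sum = P ∧ (∀ c ∈ C, a ≤ c ∧ c ≤ A) ∧
      ∀ c ∈ C, ∀ d ∈ C, c ≤ d + 1 := by
  rcases k.eq_zero_or_pos with rfl | hk
  · exact ⟨0, by simp_all⟩
  have hdiv : k * (P / k) + P % k = P := Nat.div_add_mod P k
  have hmod : P % k ≤ k := (Nat.mod_lt P hk).le
  refine ⟨.replicate (k - P % k) (P / k) + .replicate (P % k) (P / k + 1), ?_, ?_, ?_, ?_⟩
  · rw [Multiset.card_add, Multiset.card_replicate, Multiset.card_replicate,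
      Nat.sub_add_cancel hmod]
  · rw [Multiset.sum_add, Multiset.sum_replicate, Multiset.sum_replicate, smul_eq_mul,
      smul_eq_mul, mul_add_one, ← add_assoc, ← add_mul, Nat.sub_add_cancel hmod, hdiv]
  · have ha : a ≤ P / k := (Nat.le_div_iff_mul_le hk).2 (by rwa [mul_comm])
    have hA : P / k ≤ A := Nat.div_le_of_le_mul hupp
    have hA_lt (hrem : P % k ≠ 0) : P / k < A := by
      by_contra! hA_le
      have hk_mul := Nat.mul_le_mul_left k hA_le
      omega
    simp only [Multiset.mem_add, Multiset.mem_replicate]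
    grind
  · simp only [Multiset.mem_add, Multiset.mem_replicate]
    grind

end Multiset

section SquarefreeMonomialIdeal

variable {σ R : Type*}

/-- The ideal generated by the squarefree monomials with supports in `S`. -/
noncomputable def squarefreeMonomialIdeal (R : Type*) [CommSemiring R] (S : Set (Finset σ)) :
    Ideal (MvPolynomial σ R) :=
  Ideal.span ((fun s => ∏ i ∈ s, X i) '' S)

/-- The supports of the squarefree monomials of degree `c` in the variables satisfying `V`; they
generate the squarefree Veronese ideal of degree `c` in these variables. -/
def veroneseSupports (V : σ → Prop) (c : ℕ) : Set (Finset σ) :=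
  {s | s.card = c ∧ ∀ i ∈ s, V i}

/-- The supports of the squarefree monomials of degree `h` whose degree in the variables
satisfying `V` lies between `a` and `A`; they generate the generalized mixed product ideal. -/
def mixedSupports (V : σ → Prop) [DecidablePred V] (h a A : ℕ) : Set (Finset σ) :=
  {s | s.card = h ∧ a ≤ (s.filter V).card ∧ (s.filter V).card ≤ A}

theorem IsIntegralOverIdeal.mul_le_countP [CommRing R] [IsReduced R] {S : Set (Finset σ)}
    {k c : ℕ} {f : MvPolynomial σ R}
    (hf : IsIntegralOverIdeal (squarefreeMonomialIdeal R S ^ k) f) {u : σ →₀ ℕ}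
    (hu : u ∈ f.support) {T : σ → Prop} [DecidablePred T]
    (hc : ∀ s ∈ S, c ≤ (s.filter T).card) : k * c ≤ (Finsupp.toMultiset u).countP T := by
  set w : σ → ℕ := fun i => if T i then 1 else 0
  have hS : squarefreeMonomialIdeal R S ≤ weightIdeal R w c := by
    rw [squarefreeMonomialIdeal, Ideal.span_le, Set.image_subset_iff]
    exact fun s hs => prod_X_mem_weightIdeal ((hc s hs).trans_eq (Finset.card_filter T s))
  have hSk := (Ideal.pow_right_mono hS k).trans (weightIdeal_pow_le w c k)
  rw [← weight_indicator_eq_countP]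
  exact mem_weightIdeal_iff.1 (isIntegrallyClosedIdeal_weightIdeal w _ f (hf.mono hSk)) u hu

variable [CommSemiring R]

theorem monomial_eq_C_mul_prod_toMultiset (u : σ →₀ ℕ) (r : R) :
    monomial u r = C r * ((Finsupp.toMultiset u).map X).prod := by
  rw [monomial_eq, Finsupp.toMultiset_map, Finsupp.prod_toMultiset,
    Finsupp.prod_mapDomain_index (fun _ => pow_zero _) fun _ _ _ => pow_add _ _ _]

theorem prod_map_X_mem_prod_veronese [DecidableEq σ] {V : σ → Prop} {C : Multiset ℕ}
    (hC : ∀ c ∈ C, ∀ d ∈ C, c ≤ d + 1) {z : Multiset σ} (hV : ∀ i ∈ z, V i)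
    (hz : ∀ i, z.count i ≤ C.card) (hsum : z.card = C.sum) :
    (z.map X).prod ∈ (C.map fun c => squarefreeMonomialIdeal R (veroneseSupports V c)).prod := by
  induction C using Multiset.induction generalizing z with
  | empty => simp_all
  | cons c C ih =>
    have hlow : C.card * c ≤ C.sum + C.card := by
      have h := Multiset.card_nsmul_le_sum (s := C.map (· + 1)) (a := c) (by simp_all)
      rwa [Multiset.card_map, Multiset.sum_map_add, Multiset.map_id', Multiset.map_const',
        Multiset.sum_replicate, smul_eq_mul, smul_eq_mul, mul_one] at h
    have hupp : C.sum ≤ C.card * c + C.card := by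
      have h := Multiset.sum_le_card_nsmul C (c + 1) (by simp_all)
      rwa [smul_eq_mul, mul_add_one] at h
    rw [Multiset.card_cons] at hz
    rw [Multiset.sum_cons] at hsum
    obtain ⟨B, hBc, hBz, hB⟩ := exists_finset_le_count_sub_le (c := c) hz (by linarith)
      (by linarith)
    obtain ⟨y, rfl⟩ := Multiset.le_iff_exists_add.1 hBz
    rw [add_tsub_cancel_left] at hB
    rw [Multiset.map_add, Multiset.prod_add, Multiset.map_cons, Multiset.prod_cons]
    have hBV : ∀ i ∈ B, V i := fun i hi => hV i (Multiset.mem_add.2 (.inl hi))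
    refine Ideal.mul_mem_mul (Ideal.subset_span ⟨B, ⟨hBc, hBV⟩, rfl⟩) (ih ?_ ?_ hB ?_)
    · exact fun x hx y hy => hC x (Multiset.mem_cons_of_mem hx) y (Multiset.mem_cons_of_mem hy)
    · exact fun i hi => hV i (Multiset.mem_add.2 (.inr hi))
    · rw [Multiset.card_add, Finset.card_val] at hsum
      omega

theorem veronese_mul_veronese_le (V : σ → Prop) [DecidablePred V] {h a A c : ℕ} (hac : a ≤ c)
    (hcA : c ≤ A) (hch : c ≤ h) :
    squarefreeMonomialIdeal R (veroneseSupports V c) *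
        squarefreeMonomialIdeal R (veroneseSupports (fun i => ¬ V i) (h - c)) ≤
      squarefreeMonomialIdeal R (mixedSupports V h a A) := by
  classical
  rw [squarefreeMonomialIdeal, squarefreeMonomialIdeal, Ideal.span_mul_span', Ideal.span_le,
    Set.mul_subset_iff]
  rintro _ ⟨s, ⟨hs, hsV⟩, rfl⟩ _ ⟨t, ⟨ht, htV⟩, rfl⟩
  have hdisj : Disjoint s t := Finset.disjoint_left.2 fun i his hit => htV i hit (hsV i his)
  have hfilter : (s ∪ t).filter V = s := by grind
  refine Ideal.subset_span ⟨s ∪ t, ⟨?_, ?_, ?_⟩, Finset.prod_union hdisj⟩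
  · rw [Finset.card_union_of_disjoint hdisj, hs, ht, Nat.add_sub_cancel' hch]
  all_goals rwa [hfilter, hs]

theorem prod_map_X_mem_mixed_pow [DecidableEq σ] {V : σ → Prop} [DecidablePred V] {h a A k : ℕ}
    {y z : Multiset σ} (hy : ∀ i ∈ y, V i) (hz : ∀ i ∈ z, ¬ V i) (hyk : ∀ i, y.count i ≤ k)
    (hzk : ∀ i, z.count i ≤ k) (hlow : k * a ≤ y.card) (hupp : y.card ≤ k * A)
    (hcard : y.card + z.card = k * h) :
    ((y + z).map X).prod ∈ squarefreeMonomialIdeal R (mixedSupports V h a A) ^ k := by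
  obtain ⟨C, rfl, hCsum, hCmem, hC⟩ := exists_balanced_multiset (A := min A h) hlow (by
    rw [← Nat.mul_min_mul_left]
    omega)
  have hCa (c) (hc : c ∈ C) : a ≤ c := (hCmem c hc).1
  have hCA (c) (hc : c ∈ C) : c ≤ A ∧ c ≤ h := le_min_iff.1 (hCmem c hc).2
  have hCh : (C.map fun c => h - c).sum = z.card := by
    have hadd : (C.map fun c => h - c).sum + C.sum = C.card * h := by
      nth_rw 2 [← Multiset.map_id' C]
      rw [← Multiset.sum_map_add, ← smul_eq_mul, ← Multiset.sum_replicate, ← Multiset.map_const']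
      exact congrArg _ (Multiset.map_congr rfl fun c hc => Nat.sub_add_cancel (hCA c hc).2)
    omega
  have hprod : (C.map fun c => squarefreeMonomialIdeal R (veroneseSupports V c) *
      squarefreeMonomialIdeal R (veroneseSupports (fun i => ¬ V i) (h - c))).prod ≤
      squarefreeMonomialIdeal R (mixedSupports V h a A) ^ C.card := by
    rw [← Multiset.card_map]
    refine Multiset.prod_le_pow_card _ _ fun I hI => ?_
    obtain ⟨c, hc, rfl⟩ := Multiset.mem_map.1 hI
    exact veronese_mul_veronese_le V (hCa c hc) (hCA c hc).1 (hCA c hc).2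
  refine hprod ?_
  rw [Multiset.prod_map_mul, Multiset.map_add, Multiset.prod_add]
  refine Ideal.mul_mem_mul (prod_map_X_mem_prod_veronese hC hy hyk hCsum.symm) ?_
  have hC' : ∀ c ∈ C.map (h - ·), ∀ d ∈ C.map (h - ·), c ≤ d + 1 := by
    simp only [Multiset.mem_map]
    rintro _ ⟨c, hc, rfl⟩ _ ⟨d, hd, rfl⟩
    have hdc := hC d hd c hc
    omega
  have hz_mem := prod_map_X_mem_prod_veronese (R := R) hC' hz (by rwa [Multiset.card_map]) hCh.symm
  rwa [Multiset.map_map] at hz_mem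

theorem prod_map_X_mem_mixed_pow_of_le_card_filter [DecidableEq σ] {V : σ → Prop} [DecidablePred V]
    {h a A k : ℕ} {z : Multiset σ} (hz : ∀ i, z.count i ≤ k) (haA : k * a ≤ k * min A h)
    (hV : k * a ≤ (z.filter V).card) (hVc : k * (h - A) ≤ (z.filter fun i => ¬ V i).card)
    (hcard : k * h ≤ z.card) :
    (z.map X).prod ∈ squarefreeMonomialIdeal R (mixedSupports V h a A) ^ k := by
  obtain ⟨x, hxz, hx⟩ := exists_multiset_le_card_eq (min_le_left (z.filter V).card (k * min A h))
  have hQ : k * h - x.card ≤ (z.filter fun i => ¬ V i).card := by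
    have hzV := congrArg Multiset.card (Multiset.filter_add_not V z)
    have hsplit : k * min A h + k * (h - A) = k * h := by
      rw [← mul_add, min_comm, add_comm, Nat.sub_add_min_cancel]
    rw [Multiset.card_add] at hzV
    omega
  obtain ⟨y, hyz, hy⟩ := exists_multiset_le_card_eq hQ
  have hle : x + y ≤ z := (add_le_add hxz hyz).trans_eq (Multiset.filter_add_not V z)
  refine Ideal.mem_of_dvd _ (Multiset.prod_dvd_prod_of_le (Multiset.map_le_map hle)) ?_
  have hxV : ∀ i ∈ x, V i := fun i hi => Multiset.of_mem_filter (Multiset.mem_of_le hxz hi)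
  have hyV : ∀ i ∈ y, ¬ V i := fun i hi =>
    Multiset.of_mem_filter (p := fun i => ¬ V i) (Multiset.mem_of_le hyz hi)
  have hcount_le {v : Multiset σ} (hv : v ≤ z) (i : σ) : v.count i ≤ k :=
    (Multiset.count_le_of_le i hv).trans (hz i)
  have hmin := Nat.mul_min_mul_left k A h
  exact prod_map_X_mem_mixed_pow hxV hyV (hcount_le (hxz.trans (Multiset.filter_le _ _)))
    (hcount_le (hyz.trans (Multiset.filter_le _ _))) (by omega) (by omega) (by omega)

end SquarefreeMonomialIdeal

theorem generalized_mixed_product_normal_general (K : Type*) [CommRing K] [IsReduced K]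
    {σ : Type*} (V : σ → Prop) [DecidablePred V] (h a A k : ℕ) :
    IsIntegrallyClosedIdeal (squarefreeMonomialIdeal K (mixedSupports V h a A) ^ k) := by
  classical
  intro f hf
  rw [f.as_sum]
  refine Ideal.sum_mem _ fun u hu => ?_
  set z := capMultiplicity k (Finsupp.toMultiset u)
  have hW (W : σ → Prop) [DecidablePred W] (e : ℕ)
      (he : ∀ s ∈ mixedSupports V h a A, e ≤ (s.filter W).card) : k * e ≤ (z.filter W).card :=
    le_card_filter_capMultiplicity (fun T _ c hc => hf.mul_le_countP hu hc) W he
  have hVnot (s : Finset σ) := Finset.card_filter_add_card_filter_not (s := s) V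
  rw [monomial_eq_C_mul_prod_toMultiset]
  refine Ideal.mul_mem_left _ _ (Ideal.mem_of_dvd _
    (Multiset.prod_dvd_prod_of_le (Multiset.map_le_map (capMultiplicity_le k _))) ?_)
  refine prod_map_X_mem_mixed_pow_of_le_card_filter (fun i => ?_) ?_ ?_ ?_ ?_
  · exact (count_capMultiplicity k _ i).trans_le (min_le_right _ _)
  · -- If `min A h < a`, there are no generators, and the weight bound for the empty set of
    -- variables forces `k = 0`.
    have hempty : k * (a - min A h) ≤ (z.filter fun _ => False).card :=
      hW _ _ fun s ⟨hs, has, hsA⟩ => by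
        have hsV := Finset.card_filter_le s V
        omega
    rw [Multiset.filter_false, Multiset.card_zero, Nat.mul_sub] at hempty
    omega
  · exact hW V a fun s hs => hs.2.1
  · exact hW _ _ fun s ⟨hs, _, hsA⟩ => by grind
  · simpa using hW (fun _ => True) h fun s hs => by simp [hs.1]

/-- The ideal `L` of `K[x_1,…,x_n,y_1,…,y_m]` generated by all squarefree monomials of
total degree `h` whose degree in the `x`-variables lies between `a` and `A`
(i.e. `L = ∑_r I_{a_r} J_{b_r}` with consecutive degrees and constant sum `h`) is normal:
all its powers are integrally closed. -/
theorem generalized_mixed_product_normal (K : Type*) [Field K] (n m h a A : ℕ)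
    (hn : 1 ≤ n) (hm : 1 ≤ m) (hh : 1 ≤ h) (haA : a ≤ A) (han : a ≤ n) (hAn : A ≤ n)
    (hAh : A ≤ h) (ham : h ≤ a + m)
    (L : Ideal (MvPolynomial (Fin n ⊕ Fin m) K))
    (hL : L = Ideal.span {f | ∃ s : Finset (Fin n ⊕ Fin m),
        s.card = h ∧
        a ≤ (s.filter fun l => l.isLeft = true).card ∧
        (s.filter fun l => l.isLeft = true).card ≤ A ∧
        f = ∏ l ∈ s, X l}) :
    ∀ k : ℕ, 1 ≤ k → IsIntegrallyClosedIdeal (L ^ k) := by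
  subst hL
  intro k _
  simpa [squarefreeMonomialIdeal, mixedSupports, Set.image, and_assoc, @eq_comm _ _ (∏ _ ∈ _, _)]
    using generalized_mixed_product_normal_general K
      (fun l : Fin n ⊕ Fin m => l.isLeft = true) h a A k
end

section
/- Let K be a field, let n, m ≥ 1 and let s, t be integers with 2 ≤ s, s + 1 ≤ n, t ≥ 1 and r = s + t ≤ m. Let L be the ideal of S = K[x_1,…,x_n,y_1,…,y_m] equal to J_r + I_s·J_t, i.e., generated by all squarefree monomials of degree r in the y-variables together with all products of a squarefree monomial of degree s in the x-variables with a squarefree monomial of degree t in the y-variables. Then the monomial f = x_1⋯x_{s+1}·y_1^2⋯y_{t−1}^2·y_t⋯y_r is integral over L^2 but f ∉ L^2; in particular L^2 is not integrally closed. -/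
open MvPolynomial

/-!
Write `u_T` for the product of the variables `u_j`, `j ∈ T`. In these terms `f = x_A y_B y_D` with
`|A| = s + 1`, `B ⊆ D`, `|B| = t - 1` and `|D| = r`. Fix a bijection `c : A → D \ B`. Then `y_D` and
all `x_{A \ a} y_{B ∪ c a}` lie in `L`, and multiplying the latter over `a ∈ A` gives
`x_A ^ s y_B ^ s y_D`. A further factor `y_D ^ (s - 1)` turns this into `f ^ s`, so
`f ^ s ∈ L ^ (2 s)`.

Sending every `x_i` to `u` and every `y_j` to `v` maps `L ^ 2` into `(u ^ (2 s), v ^ (s + 2 t))`,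
while `f` goes to `u ^ (s + 1) v ^ (s + 2 t - 1)`, which lies outside since `s ≥ 2`.
-/

theorem IsIntegralOverIdeal.of_pow_mem {R : Type*} [CommRing R] {I : Ideal R} {f : R} {N : ℕ}
    (hN : 0 < N) (h : f ^ N ∈ I ^ N) : IsIntegralOverIdeal I f := by
  refine ⟨N, hN, Pi.single N (-f ^ N), fun i _ => ?_, ?_⟩
  · obtain rfl | hi := eq_or_ne i N
    · simpa only [Pi.single_eq_same] using neg_mem h
    · simp only [Pi.single_eq_of_ne hi, zero_mem]
  · rw [Finset.sum_eq_single_of_mem N (Finset.mem_Icc.2 ⟨hN, le_rfl⟩)]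
    · simp
    · intro i _ hi
      simp [hi]

theorem prod_prod_erase_eq_pow {ι M : Type*} [CommMonoid M] [DecidableEq ι] (A : Finset ι)
    (x : ι → M) : ∏ a ∈ A, ∏ k ∈ A.erase a, x k = (∏ k ∈ A, x k) ^ (A.card - 1) := by
  rw [Finset.prod_comm' (t' := A) (s' := fun k => A.erase k) (by grind), ← Finset.prod_pow]
  exact Finset.prod_congr rfl fun k hk => by rw [Finset.prod_const, Finset.card_erase_of_mem hk]

theorem prod_erase_mul_prod_insert {σ τ M : Type*} [CommMonoid M] [DecidableEq σ] [DecidableEq τ]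
    (x : σ → M) (y : τ → M) {A : Finset σ} {B D : Finset τ} {s : ℕ} (hA : A.card = s + 1)
    (hBD : B ⊆ D) (c : A ≃ ↥(D \ B)) :
    ∏ a : A, ((∏ i ∈ A.erase a, x i) * ∏ j ∈ insert (c a : τ) B, y j) =
      ((∏ i ∈ A, x i) * ∏ j ∈ B, y j) ^ s * ∏ j ∈ D, y j := by
  have hx : ∏ a : A, ∏ i ∈ A.erase a, x i = (∏ i ∈ A, x i) ^ s := by
    rw [Finset.prod_coe_sort A fun a => ∏ i ∈ A.erase a, x i, prod_prod_erase_eq_pow, hA,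
      Nat.add_sub_cancel]
  have hy : ∏ a : A, ∏ j ∈ insert (c a : τ) B, y j =
      (∏ j ∈ B, y j) ^ s * ∏ j ∈ D, y j := by
    calc ∏ a : A, ∏ j ∈ insert (c a : τ) B, y j
        = ∏ a : A, y (c a) * ∏ j ∈ B, y j :=
          Finset.prod_congr rfl fun a _ => Finset.prod_insert (Finset.mem_sdiff.1 (c a).2).2
      _ = (∏ j ∈ D \ B, y j) * (∏ j ∈ B, y j) ^ (s + 1) := by
          rw [Finset.prod_mul_distrib, c.prod_comp fun j => y j, Finset.prod_coe_sort,
            Finset.prod_const, Finset.card_univ, Fintype.card_coe, hA]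
      _ = (∏ j ∈ B, y j) ^ s * ∏ j ∈ D, y j := by
          rw [← Finset.prod_sdiff hBD, pow_succ, mul_left_comm]
  rw [Finset.prod_mul_distrib, hx, hy, mul_pow, mul_assoc]

section MixedProducts

variable {R R' σ τ : Type*} [CommSemiring R] [CommSemiring R']

/-- The ideal generated by the products of `d` members of the family `v` with distinct indices.
For `v` a family of polynomial variables this is `I_d` (or `J_d`). -/
def squarefreeIdeal (v : σ → R) (d : ℕ) : Ideal R :=
  Ideal.span {g | ∃ S : Finset σ, S.card = d ∧ g = ∏ i ∈ S, v i}

/-- The ideal of mixed products `J_{s+t} + I_s J_t`, where `I` is formed from `x` and `J`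
from `y`. -/
def mixedProductIdeal (x : σ → R) (y : τ → R) (s t : ℕ) : Ideal R :=
  squarefreeIdeal y (s + t) ⊔ squarefreeIdeal x s * squarefreeIdeal y t

variable {x : σ → R} {y : τ → R} {s t : ℕ}

theorem prod_mem_squarefreeIdeal (x : σ → R) {S : Finset σ} (hS : S.card = s) :
    ∏ i ∈ S, x i ∈ squarefreeIdeal x s :=
  Ideal.subset_span ⟨S, hS, rfl⟩

theorem prod_mem_mixedProductIdeal (x : σ → R) (y : τ → R) {S : Finset τ} (hS : S.card = s + t) :
    ∏ j ∈ S, y j ∈ mixedProductIdeal x y s t :=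
  Ideal.mem_sup_left (prod_mem_squarefreeIdeal y hS)

theorem prod_mul_prod_mem_mixedProductIdeal (x : σ → R) (y : τ → R) {S : Finset σ} {T : Finset τ}
    (hS : S.card = s) (hT : T.card = t) :
    (∏ i ∈ S, x i) * ∏ j ∈ T, y j ∈ mixedProductIdeal x y s t :=
  Ideal.mem_sup_right
    (Ideal.mul_mem_mul (prod_mem_squarefreeIdeal x hS) (prod_mem_squarefreeIdeal y hT))

theorem mixedProductIdeal_eq_span (x : σ → R) (y : τ → R) (s t : ℕ) :
    mixedProductIdeal x y s t = Ideal.span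
      ({g | ∃ T : Finset τ, T.card = s + t ∧ g = ∏ j ∈ T, y j} ∪
       {g | ∃ S : Finset σ, ∃ T : Finset τ, S.card = s ∧ T.card = t ∧
          g = (∏ i ∈ S, x i) * ∏ j ∈ T, y j}) := by
  rw [mixedProductIdeal, squarefreeIdeal, squarefreeIdeal, squarefreeIdeal, Ideal.span_mul_span',
    Ideal.span_union]
  congr 2
  ext g
  constructor
  · rintro ⟨_, ⟨S, hS, rfl⟩, _, ⟨T, hT, rfl⟩, rfl⟩
    exact ⟨S, T, hS, hT, rfl⟩
  · rintro ⟨S, T, hS, hT, rfl⟩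
    exact ⟨_, ⟨S, hS, rfl⟩, _, ⟨T, hT, rfl⟩, rfl⟩

theorem prod_mul_prod_mul_prod_pow_mem (x : σ → R) (y : τ → R) {A : Finset σ} {B D : Finset τ}
    (hA : A.card = s + 1) (hB : B.card + 1 = t) (hBD : B ⊆ D) (hD : D.card = s + t) :
    ((∏ i ∈ A, x i) * (∏ j ∈ B, y j) * ∏ j ∈ D, y j) ^ s ∈
      (mixedProductIdeal x y s t ^ 2) ^ s := by
  classical
  obtain rfl | hs := s.eq_zero_or_pos
  · simp
  have hcard : A.card = (D \ B).card := by
    rw [Finset.card_sdiff_of_subset hBD]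
    omega
  let c : A ≃ ↥(D \ B) := Finset.equivOfCardEq hcard
  have hmem (a : A) : (∏ i ∈ A.erase a, x i) * ∏ j ∈ insert (c a : τ) B, y j ∈
      mixedProductIdeal x y s t := by
    refine prod_mul_prod_mem_mixedProductIdeal x y ?_ ?_
    · rw [Finset.card_erase_of_mem a.2, hA, Nat.add_sub_cancel]
    · rw [Finset.card_insert_of_notMem (Finset.mem_sdiff.1 (c a).2).2, hB]
  have hprod : ((∏ i ∈ A, x i) * ∏ j ∈ B, y j) ^ s * ∏ j ∈ D, y j ∈
      mixedProductIdeal x y s t ^ (s + 1) := by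
    have h := Ideal.prod_mem_prod (s := Finset.univ) fun a _ => hmem a
    rwa [Finset.prod_const, Finset.card_univ, Fintype.card_coe, hA,
      prod_erase_mul_prod_insert x y hA hBD] at h
  have hmul := Ideal.mul_mem_mul hprod
    (Ideal.pow_mem_pow (prod_mem_mixedProductIdeal x y hD) (s - 1))
  rwa [← pow_add, show s + 1 + (s - 1) = 2 * s by omega, pow_mul, mul_assoc,
    mul_pow_sub_one hs.ne', ← mul_pow] at hmul

theorem map_squarefreeIdeal_le {φ : R →+* R'} {u : R'} (hx : ∀ i, φ (x i) = u) (d : ℕ) :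
    (squarefreeIdeal x d).map φ ≤ Ideal.span {u ^ d} := by
  rw [squarefreeIdeal, Ideal.map_span, Ideal.span_le]
  rintro _ ⟨_, ⟨S, rfl, rfl⟩, rfl⟩
  simp [hx]

theorem map_mixedProductIdeal_le {φ : R →+* R'} {u v : R'} (hx : ∀ i, φ (x i) = u)
    (hy : ∀ j, φ (y j) = v) (s t : ℕ) :
    (mixedProductIdeal x y s t).map φ ≤ Ideal.span {v ^ (s + t), u ^ s * v ^ t} := by
  rw [mixedProductIdeal, Ideal.map_sup, Ideal.map_mul, Ideal.span_insert,
    ← Ideal.span_singleton_mul_span_singleton]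
  exact sup_le_sup (map_squarefreeIdeal_le hy _)
    (Ideal.mul_mono (map_squarefreeIdeal_le hx s) (map_squarefreeIdeal_le hy t))

theorem span_pair_sq_le (u v : R) (s t : ℕ) :
    Ideal.span {v ^ (s + t), u ^ s * v ^ t} ^ 2 ≤ Ideal.span {u ^ (2 * s), v ^ (s + 2 * t)} := by
  have hu : u ^ (2 * s) ∈ Ideal.span {u ^ (2 * s), v ^ (s + 2 * t)} :=
    Ideal.subset_span (Or.inl rfl)
  have hv : v ^ (s + 2 * t) ∈ Ideal.span {u ^ (2 * s), v ^ (s + 2 * t)} :=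
    Ideal.subset_span (Or.inr rfl)
  rw [pow_two, Ideal.span_pair_mul_span_pair, Ideal.span_le]
  rintro _ (rfl | rfl | rfl | rfl)
  · exact Ideal.mem_of_dvd _ ⟨v ^ s, by ring⟩ hv
  · exact Ideal.mem_of_dvd _ ⟨u ^ s, by ring⟩ hv
  · exact Ideal.mem_of_dvd _ ⟨u ^ s, by ring⟩ hv
  · exact Ideal.mem_of_dvd _ ⟨v ^ (2 * t), by ring⟩ hu

end MixedProducts

section Polynomials

variable {R σ τ : Type*}

theorem X_pow_mul_X_pow_notMem_span [CommSemiring R] [Nontrivial R] {i j : σ} (hij : i ≠ j)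
    {a b p q : ℕ} (ha : a < p) (hb : b < q) :
    (X i ^ a * X j ^ b : MvPolynomial σ R) ∉ Ideal.span {X i ^ p, X j ^ q} := by
  classical
  rw [X_pow_eq_monomial, X_pow_eq_monomial, X_pow_eq_monomial, X_pow_eq_monomial, monomial_mul,
    one_mul, ← Set.image_pair (fun e => monomial e (1 : R)), mem_ideal_span_monomial_image,
    support_monomial, if_neg one_ne_zero]
  simp only [Finset.mem_singleton, forall_eq, Set.mem_insert_iff, Set.mem_singleton_iff,
    exists_eq_or_imp, exists_eq_left, Finsupp.single_le_iff, Finsupp.add_apply,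
    Finsupp.single_eq_same, Finsupp.single_eq_of_ne hij, Finsupp.single_eq_of_ne hij.symm]
  omega

theorem prod_mul_prod_mul_prod_notMem_sq [CommSemiring R] [Nontrivial R] {s t : ℕ}
    {A : Finset σ} {B D : Finset τ} (hA : A.card < 2 * s) (hBD : B.card + D.card < s + 2 * t) :
    ((∏ i ∈ A, X (Sum.inl i)) * (∏ j ∈ B, X (Sum.inr j)) * ∏ j ∈ D, X (Sum.inr j) :
      MvPolynomial (σ ⊕ τ) R) ∉
        mixedProductIdeal (fun i => X (Sum.inl i)) (fun j => X (Sum.inr j)) s t ^ 2 := by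
  intro hmem
  let φ : MvPolynomial (σ ⊕ τ) R →ₐ[R] MvPolynomial (Fin 2) R :=
    rename (Sum.elim (fun _ => 0) fun _ => 1)
  have hx (i : σ) : φ (X (Sum.inl i)) = X 0 := rename_X _ _
  have hy (j : τ) : φ (X (Sum.inr j)) = X 1 := rename_X _ _
  refine X_pow_mul_X_pow_notMem_span (R := R) (zero_ne_one (α := Fin 2)) hA hBD
    (span_pair_sq_le _ _ s t (Ideal.pow_right_mono (map_mixedProductIdeal_le hx hy s t) 2 ?_))
  have hφmem := Ideal.mem_map_of_mem (φ : MvPolynomial (σ ⊕ τ) R →+* MvPolynomial (Fin 2) R) hmem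
  simpa [Ideal.map_pow, hx, hy, pow_add, mul_assoc] using hφmem

theorem Jr_plus_IsJt_square_not_integrally_closed_general [CommRing R] [Nontrivial R] {s t : ℕ}
    {A : Finset σ} {B D : Finset τ} (hs : 2 ≤ s) (hA : A.card = s + 1) (hB : B.card + 1 = t)
    (hBD : B ⊆ D) (hD : D.card = s + t) {L : Ideal (MvPolynomial (σ ⊕ τ) R)}
    (hL : L = mixedProductIdeal (fun i => X (Sum.inl i)) (fun j => X (Sum.inr j)) s t)
    {f : MvPolynomial (σ ⊕ τ) R}
    (hf : f = (∏ i ∈ A, X (Sum.inl i)) * (∏ j ∈ B, X (Sum.inr j)) * ∏ j ∈ D, X (Sum.inr j)) :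
    IsIntegralOverIdeal (L ^ 2) f ∧ f ∉ L ^ 2 ∧ ¬ IsIntegrallyClosedIdeal (L ^ 2) := by
  subst hL hf
  have hint := IsIntegralOverIdeal.of_pow_mem (N := s) (by omega)
    (prod_mul_prod_mul_prod_pow_mem (fun i => (X (Sum.inl i) : MvPolynomial (σ ⊕ τ) R))
      (fun j => X (Sum.inr j)) hA hB hBD hD)
  have hnot := prod_mul_prod_mul_prod_notMem_sq (R := R) (A := A) (B := B) (D := D) (s := s)
    (t := t) (by omega) (by omega)
  exact ⟨hint, hnot, fun hclosed => hnot (hclosed _ hint)⟩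

end Polynomials

section InitialSegments

variable {M : Type*} [CommMonoid M] {n : ℕ}

theorem prod_pow_ite_lt (v : Fin n → M) (k : ℕ) :
    ∏ i, v i ^ (if (i : ℕ) < k then 1 else 0) = ∏ i with i.val < k, v i := by
  simp only [Finset.prod_filter, pow_ite, pow_one, pow_zero]

theorem prod_pow_ite_lt_ite_lt (v : Fin n → M) {k l : ℕ} (hkl : k ≤ l) :
    ∏ i, v i ^ (if (i : ℕ) < k then 2 else if (i : ℕ) < l then 1 else 0) =
      (∏ i with i.val < k, v i) * ∏ i with i.val < l, v i := by
  rw [← prod_pow_ite_lt, ← prod_pow_ite_lt, ← Finset.prod_mul_distrib]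
  refine Finset.prod_congr rfl fun i _ => ?_
  rw [← pow_add]
  congr 1
  split_ifs <;> omega

end InitialSegments

/-- For `L = J_r + I_s J_t` with `2 ≤ s`, `s + 1 ≤ n`, `t ≥ 1`, `r = s + t ≤ m`, the
monomial `f = x_1⋯x_{s+1} y_1^2⋯y_{t-1}^2 y_t⋯y_r` is integral over `L^2` but does not
belong to `L^2`; in particular `L^2` is not integrally closed. -/
theorem Jr_plus_IsJt_square_not_integrally_closed (K : Type*) [Field K]
    (n m s t r : ℕ) (hn : 1 ≤ n) (hm : 1 ≤ m)
    (hs : 2 ≤ s) (hsn : s + 1 ≤ n) (ht : 1 ≤ t) (hr : r = s + t) (hrm : r ≤ m)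
    (L : Ideal (MvPolynomial (Fin n ⊕ Fin m) K))
    (hL : L = Ideal.span
        ({g | ∃ sy : Finset (Fin m), sy.card = r ∧ g = ∏ j ∈ sy, X (Sum.inr j)} ∪
         {g | ∃ sx : Finset (Fin n), ∃ sy : Finset (Fin m), sx.card = s ∧ sy.card = t ∧
            g = (∏ i ∈ sx, X (Sum.inl i)) * ∏ j ∈ sy, X (Sum.inr j)}))
    (f : MvPolynomial (Fin n ⊕ Fin m) K)
    (hf : f = (∏ i : Fin n, X (Sum.inl i) ^ (if (i : ℕ) < s + 1 then 1 else 0)) *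
        ∏ j : Fin m, X (Sum.inr j) ^
          (if (j : ℕ) < t - 1 then 2 else if (j : ℕ) < r then 1 else 0)) :
    IsIntegralOverIdeal (L ^ 2) f ∧ f ∉ L ^ 2 ∧ ¬ IsIntegrallyClosedIdeal (L ^ 2) := by
  subst hr
  rw [prod_pow_ite_lt, prod_pow_ite_lt_ite_lt _ (by omega), ← mul_assoc] at hf
  exact Jr_plus_IsJt_square_not_integrally_closed_general hs
    (by rw [Fin.card_filter_val_lt]; omega) (by rw [Fin.card_filter_val_lt]; omega)
    (Finset.monotone_filter_right _ fun j _ hj => by omega)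
    (by rw [Fin.card_filter_val_lt]; omega)
    (hL.trans (mixedProductIdeal_eq_span _ _ s t).symm) hf
end

section
/- Let K be a field, let n, m > 1 and let h be an integer with 2 ≤ h ≤ n + m − 1. Let L be the ideal of S = K[x_1,…,x_n,y_1,…,y_m] generated by all squarefree monomials of total degree h that involve at least one x-variable and at least one y-variable (equivalently, L = ∑_{r=1}^{h−1} I_r J_{h−r}, where I_c is the squarefree Veronese ideal of degree c in the x-variables and J_d that of degree d in the y-variables). Then L has linear quotients. -/
open MvPolynomial

/-- A monomial ideal `L` has linear quotients: its minimal monomial generators can be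
ordered `u_0, …, u_{q-1}` (they are monic monomials, none dividing another, and they
generate `L`) so that each colon ideal `(u_0, …, u_{i-1}) : (u_i)` is generated by a
subset of the variables. -/
def HasLinearQuotients {σ : Type*} {K : Type*} [CommRing K]
    (L : Ideal (MvPolynomial σ K)) : Prop :=
  ∃ (q : ℕ) (u : Fin q → MvPolynomial σ K),
    Function.Injective u ∧
    Ideal.span (Set.range u) = L ∧
    (∀ i, ∃ d : σ →₀ ℕ, u i = monomial d 1) ∧
    (∀ i j, i ≠ j → ¬ u i ∣ u j) ∧
    ∀ i : Fin q, ∃ V : Set σ,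
      Submodule.colon (Ideal.span (u '' {j | j < i})) (Ideal.span {u i}) =
        Ideal.span (X '' V)

/-!
The squarefree monomials generating `L` correspond to the `h`-subsets of the variables that meet
two disjoint sets. The `h`-subsets meeting every member `S i` of a disjoint family have the matroid
exchange property: if `B` meets `S i` only in `b`, then any element of `A` in `S i` can replace `b`,
and disjointness ensures that no other member of the family needed `b`.

For the bases of a matroid the colexicographic order gives linear quotients. If `A` precedes `B`,
let `b` be the largest element of their symmetric difference, so `b ∈ B`. Exchanging `b` for some
`a ∈ A \ B` gives a base `C` that precedes `B` since `a < b`, and `X a * u_B = X b * u_C`, so that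
`X a` lies in the colon ideal at `B` and divides `u_A / gcd(u_A, u_B)`.
-/

section MonomialIdeals

variable {σ K : Type*}

theorem mul_monomial_mem_span_monomial_image_iff [CommSemiring K] {f : MvPolynomial σ K}
    {d : σ →₀ ℕ} {S : Set (σ →₀ ℕ)} :
    f * monomial d 1 ∈ Ideal.span ((fun s => monomial s (1 : K)) '' S) ↔
      ∀ e ∈ f.support, ∃ s ∈ S, s ≤ e + d := by
  rw [mem_ideal_span_monomial_image]
  have hsupport : (f * monomial d 1).support = f.support.map (addRightEmbedding d) :=
    AddMonoidAlgebra.support_coeff_mul_single _ _ (by simp) _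
  simp [hsupport]

theorem colon_span_monomial_image_eq_span_X_image [CommSemiring K] {S : Set (σ →₀ ℕ)}
    {d : σ →₀ ℕ} (hS : ∀ s ∈ S, ∃ a, d a < s a ∧ ∃ t ∈ S, t ≤ d + Finsupp.single a 1) :
    Submodule.colon (Ideal.span ((fun s => monomial s (1 : K)) '' S))
        (Ideal.span {monomial d (1 : K)}) =
      Ideal.span (X '' {a | ∃ t ∈ S, t ≤ d + Finsupp.single a 1}) := by
  ext f
  rw [Ideal.mem_colon_span_singleton, mul_monomial_mem_span_monomial_image_iff,
    mem_ideal_span_X_image]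
  refine forall₂_congr fun e _ => ⟨?_, ?_⟩
  · rintro ⟨s, hs, hse⟩
    obtain ⟨a, hda, ha⟩ := hS s hs
    have hsa : s a ≤ e a + d a := hse a
    exact ⟨a, ha, by lia⟩
  · rintro ⟨a, ⟨t, ht, hta⟩, hea⟩
    have hae : Finsupp.single a 1 ≤ e := Finsupp.single_le_iff.2 (Nat.one_le_iff_ne_zero.2 hea)
    exact ⟨t, ht, hta.trans (by rw [add_comm e]; gcongr)⟩

theorem hasLinearQuotients_span_range_monomial [CommRing K] [Nontrivial K] {ι : Type*}
    [Finite ι] [LinearOrder ι] {d : ι → σ →₀ ℕ} (hanti : ∀ i j, d i ≤ d j → i = j)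
    (hquot : ∀ i, ∀ j < i, ∃ a, d i a < d j a ∧ ∃ k < i, d k ≤ d i + Finsupp.single a 1) :
    HasLinearQuotients (Ideal.span (Set.range fun i => monomial (d i) (1 : K))) := by
  have := Fintype.ofFinite ι
  let e : Fin (Fintype.card ι) ≃o ι := Fintype.orderIsoFinOfCardEq ι rfl
  have hd : Function.Injective d := fun i j hij => hanti i j hij.le
  refine ⟨_, fun i => monomial (d (e i)) 1,
    (monomial_left_injective one_ne_zero).comp (hd.comp e.injective),
    congrArg Ideal.span (e.surjective.range_comp fun i => monomial (d i) (1 : K)),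
    fun i => ⟨_, rfl⟩, fun i j hij hdvd => ?_, fun i => ?_⟩
  · simp only [monomial_dvd_monomial, one_ne_zero, false_or, dvd_refl, and_true] at hdvd
    exact hij (e.injective (hanti _ _ hdvd))
  · have hcolon := colon_span_monomial_image_eq_span_X_image (K := K)
      (S := (fun j => d (e j)) '' {j | j < i}) (d := d (e i)) ?_
    · rw [Set.image_image] at hcolon
      exact ⟨_, hcolon⟩
    rintro _ ⟨j, hji, rfl⟩
    obtain ⟨a, ha, k, hki, hk⟩ := hquot (e i) (e j) (e.lt_iff_lt.2 hji)
    exact ⟨a, ha, _, ⟨e.symm k, e.symm_apply_lt.2 hki, rfl⟩, by simpa using hk⟩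

end MonomialIdeals

section SquarefreeMonomials

variable {σ : Type*}

/-- The exponent vector of the squarefree monomial `∏ l ∈ s, X l`. -/
noncomputable def squarefreeExponent (s : Finset σ) : σ →₀ ℕ :=
  Finsupp.indicator s fun _ _ => 1

theorem squarefreeExponent_apply [DecidableEq σ] (s : Finset σ) (a : σ) :
    squarefreeExponent s a = if a ∈ s then 1 else 0 := by
  simp [squarefreeExponent, Finsupp.indicator_apply]

theorem squarefreeExponent_le_iff {s t : Finset σ} :
    squarefreeExponent s ≤ squarefreeExponent t ↔ s ⊆ t := by
  classical
  refine forall_congr' fun a => ?_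
  by_cases a ∈ s <;> by_cases a ∈ t <;> simp_all [squarefreeExponent_apply]

theorem squarefreeExponent_insert_erase_le [DecidableEq σ] (s : Finset σ) (a b : σ) :
    squarefreeExponent (insert a (s.erase b)) ≤ squarefreeExponent s + Finsupp.single a 1 := by
  intro c
  simp only [Finsupp.add_apply, squarefreeExponent_apply, Finsupp.single_apply]
  grind

theorem prod_X_eq_monomial_squarefreeExponent {K : Type*} [CommSemiring K] (s : Finset σ) :
    ∏ l ∈ s, (X l : MvPolynomial σ K) = monomial (squarefreeExponent s) 1 := by
  classical
  have hsum : squarefreeExponent s = ∑ l ∈ s, Finsupp.single l 1 := by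
    ext a
    simp [squarefreeExponent_apply, Finsupp.single_apply]
  rw [hsum, monomial_sum_one]
  rfl

end SquarefreeMonomials

section ExchangeProperty

variable {σ : Type*}

theorem exists_colex_exchange [LinearOrder σ] {IsBase : Set σ → Prop}
    (hexch : Matroid.ExchangeProperty IsBase) {A B : Finset σ} (hA : IsBase A) (hB : IsBase B)
    (hAB : toColex A < toColex B) :
    ∃ a ∈ A, a ∉ B ∧ ∃ b, IsBase (insert a (B.erase b) : Finset σ) ∧
      toColex (insert a (B.erase b)) < toColex B := by
  obtain ⟨b, hbB, hbA, hmax⟩ := Finset.Colex.toColex_lt_toColex_iff_exists_forall_lt.1 hAB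
  obtain ⟨a, ⟨haA, haB⟩, hC⟩ := hexch B A hB hA b ⟨hbB, hbA⟩
  refine ⟨a, haA, haB, b, by simpa using hC, ?_⟩
  conv_rhs => rw [← Finset.insert_erase hbB]
  exact (Finset.Colex.insert_lt_insert (fun h => haB (Finset.mem_of_mem_erase h))
    (Finset.notMem_erase b B)).2 (hmax a haA haB)

theorem hasLinearQuotients_of_exchangeProperty {K : Type*} [CommRing K] [Nontrivial K] [Finite σ]
    {IsBase : Set σ → Prop} (hexch : Matroid.ExchangeProperty IsBase) :
    HasLinearQuotients (Ideal.span
      {f : MvPolynomial σ K | ∃ s : Finset σ, IsBase s ∧ f = ∏ l ∈ s, X l}) := by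
  obtain ⟨_, -⟩ := exists_wellFoundedLT σ
  have : Finite (Colex (Finset σ)) := Finite.of_equiv _ toColex
  let u : {B : Colex (Finset σ) // IsBase (ofColex B : Finset σ)} → σ →₀ ℕ :=
    fun B => squarefreeExponent (ofColex B.1)
  have hrange : {f : MvPolynomial σ K | ∃ s : Finset σ, IsBase s ∧ f = ∏ l ∈ s, X l} =
      Set.range fun B => monomial (u B) 1 := by
    ext f
    simp only [prod_X_eq_monomial_squarefreeExponent]
    exact ⟨fun ⟨s, hs, hf⟩ => ⟨⟨toColex s, hs⟩, hf.symm⟩, fun ⟨B, hf⟩ => ⟨_, B.2, hf.symm⟩⟩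
  rw [hrange]
  refine hasLinearQuotients_span_range_monomial (fun A B hAB => ?_) fun B A hAB => ?_
  · have hsub := Finset.coe_subset.2 (squarefreeExponent_le_iff.1 hAB)
    exact Subtype.ext (ofColex_inj.1 (Finset.coe_injective (hexch.antichain A.2 B.2 hsub)))
  · obtain ⟨a, haA, haB, b, hC, hCB⟩ := exists_colex_exchange hexch A.2 B.2 hAB
    exact ⟨a, by simp [u, squarefreeExponent_apply, haA, haB],
      ⟨toColex _, hC⟩, hCB, squarefreeExponent_insert_erase_le _ a b⟩

theorem exchangeProperty_encard_eq_and_inter_nonempty {ι : Type*} {S : ι → Set σ}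
    (hS : Pairwise fun i j => Disjoint (S i) (S j)) (h : ℕ) :
    Matroid.ExchangeProperty fun B : Set σ => B.encard = h ∧ ∀ i, (B ∩ S i).Nonempty := by
  rintro B A ⟨hBcard, hB⟩ ⟨hAcard, hA⟩ b ⟨hbB, hbA⟩
  suffices hexch : ∃ a ∈ A \ B, ∀ i, (insert a (B \ {b}) ∩ S i).Nonempty by
    obtain ⟨a, ha, hmeets⟩ := hexch
    exact ⟨a, ha, (Set.encard_exchange ha.2 hbB).trans hBcard, hmeets⟩
  by_cases hmeets : ∀ i, ((B \ {b}) ∩ S i).Nonempty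
  · obtain ⟨a, haA, haB⟩ : (A \ B).Nonempty := by
      rw [Set.sdiff_nonempty]
      intro hAB
      have hAfin : A.Finite := Set.finite_of_encard_eq_coe hAcard
      exact hbA (hAfin.eq_of_subset_of_encard_le hAB (hBcard.trans hAcard.symm).le ▸ hbB)
    exact ⟨a, ⟨haA, haB⟩, fun i =>
      (hmeets i).mono (Set.inter_subset_inter_left _ (Set.subset_insert _ _))⟩
  · push Not at hmeets
    obtain ⟨i, hi⟩ := hmeets
    have honly : ∀ c ∈ B, c ∈ S i → c = b := fun c hcB hci => by
      by_contra hcb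
      exact Set.eq_empty_iff_forall_notMem.1 hi c ⟨⟨hcB, hcb⟩, hci⟩
    obtain ⟨c, hcB, hci⟩ := hB i
    have hbi : b ∈ S i := honly c hcB hci ▸ hci
    obtain ⟨a, haA, hai⟩ := hA i
    refine ⟨a, ⟨haA, fun haB => hbA (honly a haB hai ▸ haA)⟩, fun j => ?_⟩
    obtain rfl | hij := eq_or_ne i j
    · exact ⟨a, Set.mem_insert _ _, hai⟩
    · obtain ⟨c, hcB, hcj⟩ := hB j
      have hcb : c ≠ b := fun hcb => Set.disjoint_left.1 (hS hij) hbi (hcb ▸ hcj)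
      exact ⟨c, Set.mem_insert_of_mem _ ⟨hcB, hcb⟩, hcj⟩

end ExchangeProperty

theorem mixed_squarefree_veronese_linear_quotients_general {σ ι K : Type*} [Finite σ]
    [CommRing K] [Nontrivial K] {S : ι → Set σ} (hS : Pairwise fun i j => Disjoint (S i) (S j))
    (h : ℕ) :
    HasLinearQuotients (Ideal.span {f : MvPolynomial σ K | ∃ s : Finset σ,
      s.card = h ∧ (∀ i, ∃ l ∈ s, l ∈ S i) ∧ f = ∏ l ∈ s, X l}) := by
  simpa [Set.Nonempty, and_assoc] using
    hasLinearQuotients_of_exchangeProperty (K := K)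
      (exchangeProperty_encard_eq_and_inter_nonempty hS h)

/-- The ideal of `K[x_1,…,x_n,y_1,…,y_m]` generated by all squarefree monomials of total
degree `h` involving at least one `x`-variable and at least one `y`-variable
(i.e. `L = ∑_{r=1}^{h-1} I_r J_{h-r}`) has linear quotients. -/
theorem mixed_squarefree_veronese_linear_quotients (K : Type*) [Field K]
    (n m h : ℕ) (hn : 1 < n) (hm : 1 < m) (hh : 2 ≤ h) (hhnm : h ≤ n + m - 1)
    (L : Ideal (MvPolynomial (Fin n ⊕ Fin m) K))
    (hL : L = Ideal.span {f | ∃ s : Finset (Fin n ⊕ Fin m),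
        s.card = h ∧ (∃ i : Fin n, Sum.inl i ∈ s) ∧ (∃ j : Fin m, Sum.inr j ∈ s) ∧
        f = ∏ l ∈ s, X l}) :
    HasLinearQuotients L := by
  subst hL
  have hdisj : Disjoint (Set.range (Sum.inr : Fin m → Fin n ⊕ Fin m)) (Set.range Sum.inl) :=
    Set.isCompl_range_inl_range_inr.disjoint.symm
  simpa [and_assoc] using mixed_squarefree_veronese_linear_quotients_general (K := K)
    (pairwise_disjoint_on_bool.2 hdisj) h
end
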